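/- arXiv:2410.11353 — 2 statements merged into one kernel-verified Lean document; each statement's English description precedes it below -/
import Mathlib

section
/- Let p ≥ 5 be a prime and K a field of characteristic p. The polynomial θ_{s,t}(X) of degree (p−1)/2, satisfying θ_{s,t}(x^p) = ψ_{p,s,t}(x) mod p, is irreducible over K(s,t). -/
open WeierstrassCurve Polynomial

/-- The Weierstrass curve `y² = x³ + sx + t` over the polynomial ring `R[s,t]`, where
`s = X 0` and `t = X 1` in `MvPolynomial (Fin 2) R`. -/
noncomputable def Wst (R : Type*) [CommRing R] : WeierstrassCurve (MvPolynomial (Fin 2) R) :=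
  { a₁ := 0, a₂ := 0, a₃ := 0, a₄ := MvPolynomial.X 0, a₆ := MvPolynomial.X 1 }

/-!
Let `p = 2m + 1` and specialise `y² = x³ + sx + t` to a Legendre pencil with parameter `l`, brought
to short form; the degree in `l` of the leading coefficient of `θ` is then at most `m`.

The `m` roots of Deuring's polynomial `H_m` are simple, because `H_m` satisfies a hypergeometric
differential equation. If `l` is a root of `H_m`, the curve `y² = f(x)` has no point of order `p`.
Such a point would give coprime polynomials with `A² - f B² = c (x - x₀)^p`; differentiating, and
comparing degrees, shows that `A` is an eigenvector, with nonzero eigenvalue, of the square of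
`D = y d/dx`. But the vanishing of `H_m` at `l` makes `f ^ m` the derivative of some `F`, so that
`D F = y ^ p` is killed by `D`, and the derivation `D ^ p`, which kills `F`, vanishes. As the roots
of `ψ_p` are abscissas of points of order `p`, the specialisation of `θ` at `l` is constant.

Hence each root `l₀` of `H_m` gives a factor `l - l₀` dividing every coefficient of `θ` but the
constant one. It divides the leading coefficient exactly once, since that coefficient has degree at
most `m` in `l` and vanishes at the `m` roots of `H_m`. The reversed Eisenstein criterion applies at
the prime that `l - l₀` induces on `K[s, t]`.
-/

section EllipticSequence

theorem normEDS_two_three_two (n : ℕ) : normEDS (2 : ℤ) 3 2 n = n := by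
  induction n using normEDSRec with
  | zero => simp
  | one => simp
  | two => simp
  | three => simp
  | four => simp
  | even m h₁ h₂ h₃ h₄ h₅ =>
    have h := normEDS_even (2 : ℤ) 3 2 (m + 3)
    apply mul_right_cancel₀ (two_ne_zero (α := ℤ))
    push_cast at *
    rw [h, add_sub_assoc, add_sub_assoc, add_assoc, add_assoc]
    norm_num [h₁, h₂, h₃, h₄, h₅]
    ring
  | odd m h₁ h₂ h₃ h₄ =>
    have h := normEDS_odd (2 : ℤ) 3 2 (m + 2)
    push_cast at *
    rw [h, add_sub_assoc, add_assoc, add_assoc]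
    norm_num [h₁, h₂, h₃, h₄]
    ring

theorem isEllipticSequence_of_forall_pos {R : Type*} [CommRing R] {W : ℤ → R} (hodd : W.Odd)
    (hW0 : W 0 = 0) (hW1 : W 1 = 1)
    (h : ∀ m n : ℤ, 1 ≤ m → m ≤ n → W (n + m) * W (n - m) =
      W (n + 1) * W (n - 1) * W m ^ 2 - W (m + 1) * W (m - 1) * W n ^ 2) :
    IsEllipticSequence W := by
  have hneg (n : ℤ) : W (-n) = -W n := hodd n
  have key (n m : ℤ) : W (n + m) * W (n - m) =
      W (n + 1) * W (n - 1) * W m ^ 2 - W (m + 1) * W (m - 1) * W n ^ 2 := by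
    wlog hn : 0 ≤ n generalizing n
    · have := this (-n) (by lia)
      simp only [show -n + m = -(n - m) by ring, show -n - m = -(n + m) by ring,
        show -n + 1 = -(n - 1) by ring, show -n - 1 = -(n + 1) by ring, hneg] at this
      linear_combination this
    wlog hm : 0 ≤ m generalizing m
    · have := this (-m) (by lia)
      simp only [show n + -m = n - m by ring, show n - -m = n + m by ring,
        show -m + 1 = -(m - 1) by ring, show -m - 1 = -(m + 1) by ring, hneg] at this
      linear_combination this
    wlog hmn : m ≤ n generalizing m n
    · have := this m hm n hn (by lia)
      rw [← neg_sub, hneg, add_comm] at this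
      linear_combination -this
    obtain rfl | hm := hm.eq_or_lt
    · simp [hneg, hW1, hW0]; ring
    · exact h m n hm hmn
  intro p q r
  simp only [IsEllipticNet.rel, add_zero]
  linear_combination W r ^ 2 * key p q - W q ^ 2 * key p r + W p ^ 2 * key q r

section Somos

variable {R : Type*} [CommRing R] [IsDomain R] {W : ℤ → R} {M : ℤ} (hW0 : W 0 = 0) (hW1 : W 1 = 1)
  (hne : ∀ n, 1 ≤ n → n < M → W n ≠ 0)
  (hSomos : ∀ n, 2 ≤ n → n + 2 ≤ M →
    W (n + 2) * W (n - 2) = W (n + 1) * W (n - 1) * W 2 ^ 2 - W 3 * W n ^ 2)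

include hW0 hW1 hne hSomos

theorem somos_invariant {n : ℤ} (hn : 2 ≤ n) (hM : n + 2 ≤ M) :
    W 2 * W 3 * (W (n + 2) * W (n - 1) ^ 2 + W (n - 2) * W (n + 1) ^ 2 + W 2 ^ 2 * W n ^ 3) =
      (W 4 + W 2 ^ 5) * W (n + 1) * W n * W (n - 1) := by
  induction n, hn using Int.leInduction with
  | base => norm_num [hW1, hW0]; ring
  | succ n hn ih =>
    have hS := hSomos n hn (by lia)
    have hS' := hSomos (n + 1) (by lia) hM
    specialize ih (by lia)
    simp only [show n + 1 + 2 = n + 3 by ring, show n + 1 - 2 = n - 1 by ring,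
      show n + 1 + 1 = n + 2 by ring, show n + 1 - 1 = n by ring] at hS' ⊢
    apply mul_right_cancel₀ (hne (n - 1) (by lia) (by lia))
    linear_combination W 2 * W 3 * W n ^ 2 * hS' + W (n + 2) * ih - W 2 * W 3 * W (n + 1) ^ 2 * hS

theorem elliptic_add_one_of_somos {l n : ℤ} (hl : 2 ≤ l) (hln : l + 1 < n) (hM : n + l + 1 ≤ M)
    (h₁ : W (n + 1 + l) * W (n + 1 - l) =
      W (n + 1 + 1) * W (n + 1 - 1) * W l ^ 2 - W (l + 1) * W (l - 1) * W (n + 1) ^ 2)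
    (h₂ : W (n - 1 + l) * W (n - 1 - l) =
      W (n - 1 + 1) * W (n - 1 - 1) * W l ^ 2 - W (l + 1) * W (l - 1) * W (n - 1) ^ 2)
    (h₃ : W (n + (l - 1)) * W (n - (l - 1)) =
      W (n + 1) * W (n - 1) * W (l - 1) ^ 2 - W (l - 1 + 1) * W (l - 1 - 1) * W n ^ 2) :
    W (n + (l + 1)) * W (n - (l + 1)) =
      W (n + 1) * W (n - 1) * W (l + 1) ^ 2 - W (l + 1 + 1) * W (l + 1 - 1) * W n ^ 2 := by
  have hSn := hSomos n (by lia) (by lia)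
  have hSl := hSomos l (by lia) (by lia)
  have hIn := somos_invariant hW0 hW1 hne hSomos (n := n) (by lia) (by lia)
  have hIl := somos_invariant hW0 hW1 hne hSomos (n := l) (by lia) (by lia)
  have hne₀ : W 2 * W 3 * (W (n + l - 1) * W (n - l + 1)) ≠ 0 := by
    simp only [ne_eq, mul_eq_zero, not_or]
    exact ⟨⟨hne _ (by lia) (by lia), hne _ (by lia) (by lia)⟩,
      hne _ (by lia) (by lia), hne _ (by lia) (by lia)⟩
  simp only [show n + 1 + l = n + (l + 1) by ring, show n + 1 - l = n - l + 1 by ring,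
    show n + 1 + 1 = n + 2 by ring, show n + 1 - 1 = n by ring,
    show n - 1 + l = n + l - 1 by ring, show n - 1 - l = n - (l + 1) by ring,
    show n - 1 + 1 = n by ring, show n - 1 - 1 = n - 2 by ring,
    show n + (l - 1) = n + l - 1 by ring, show n - (l - 1) = n - l + 1 by ring,
    show l - 1 + 1 = l by ring, show l - 1 - 1 = l - 2 by ring,
    show l + 1 + 1 = l + 2 by ring, show l + 1 - 1 = l by ring] at h₁ h₂ h₃ ⊢
  apply mul_right_cancel₀ hne₀
  linear_combination W 2 * W 3 * (W (n + l - 1) * W (n - (l + 1)) * h₁ +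
      (W (n + 2) * W n * W l ^ 2 - W (l + 1) * W (l - 1) * W (n + 1) ^ 2) * h₂ -
      (W (n + 1) * W (n - 1) * W (l + 1) ^ 2 - W (l + 2) * W l * W n ^ 2) * h₃ +
      W n ^ 2 * W l ^ 4 * hSn - W l ^ 2 * W n ^ 4 * hSl) -
    W (l + 1) * W (l - 1) * W l ^ 2 * W n * hIn + W (n + 1) * W (n - 1) * W n ^ 2 * W l * hIl

theorem elliptic_of_somos {m n : ℤ} (hm : 1 ≤ m) (hmn : m ≤ n) (hM : n + m ≤ M) :
    W (n + m) * W (n - m) = W (n + 1) * W (n - 1) * W m ^ 2 - W (m + 1) * W (m - 1) * W n ^ 2 := by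
  induction m using Int.strongRec (m := 1) generalizing n with
  | lt m h => lia
  | ge m _ ih =>
  obtain rfl | rfl | ⟨l, hl, rfl⟩ : m = 1 ∨ m = 2 ∨ ∃ l, 2 ≤ l ∧ m = l + 1 := by
    by_cases 3 ≤ m
    · exact .inr (.inr ⟨m - 1, by lia, by lia⟩)
    · lia
  · simp [hW0, hW1]
  · simpa [hW1] using hSomos n hmn hM
  obtain rfl | hlt := hmn.eq_or_lt
  · simp [hW0]
  exact elliptic_add_one_of_somos hW0 hW1 hne hSomos hl hlt (by lia)
    (ih l (by lia) (by lia) (by lia) (by lia)) (ih l (by lia) (by lia) (by lia) (by lia))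
    (ih (l - 1) (by lia) (by lia) (by lia) (by lia))

end Somos

theorem normEDS_eq_of_elliptic {R : Type*} [CommRing R] [IsDomain R] {b c d : R}
    (hb : b ≠ 0) {W : ℤ → R} {N : ℤ} (hN : 5 ≤ N)
    (hW : ∀ k < N, W k = normEDS b c d k)
    (hell : ∀ n m, 1 ≤ m → m ≤ n → n + m = N →
      W N * W (n - m) = W (n + 1) * W (n - 1) * W m ^ 2 - W (m + 1) * W (m - 1) * W n ^ 2) :
    W N = normEDS b c d N := by
  obtain ⟨k, hk | hk⟩ := N.even_or_odd'
  · have h := hell (k + 1) (k - 1) (by lia) (by lia) (by lia)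
    simp only [show k + 1 - (k - 1) = 2 by ring, show k + 1 + 1 = k + 2 by ring,
      show k + 1 - 1 = k by ring, show k - 1 + 1 = k by ring, show k - 1 - 1 = k - 2 by ring] at h
    rw [hW 2 (by lia), hW (k + 2) (by lia), hW k (by lia), hW (k - 1) (by lia),
      hW (k - 2) (by lia), hW (k + 1) (by lia), normEDS_two] at h
    apply mul_right_cancel₀ hb
    rw [h, hk, normEDS_even]
    ring
  · have h := hell (k + 1) k (by lia) (by lia) (by lia)
    simp only [show k + 1 - k = 1 by ring, show k + 1 + 1 = k + 2 by ring,
      show k + 1 - 1 = k by ring] at h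
    rw [hW 1 (by lia), hW (k + 2) (by lia), hW k (by lia), hW (k + 1) (by lia),
      hW (k - 1) (by lia), normEDS_one, mul_one] at h
    rw [h, hk, normEDS_odd]
    ring

section Field

variable {F : Type*} [Field F]

theorem normEDS_somos {b c d : F} (hne : ∀ n : ℤ, 1 ≤ n → normEDS b c d n ≠ 0) {n : ℤ}
    (hn : 2 ≤ n) : normEDS b c d (n + 2) * normEDS b c d (n - 2) =
      normEDS b c d (n + 1) * normEDS b c d (n - 1) * b ^ 2 - c * normEDS b c d n ^ 2 := by
  induction n using Int.strongRec (m := 2) with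
  | lt n h => lia
  | ge n _ ih =>
  obtain rfl | hn3 := hn.eq_or_lt
  · norm_num
  -- Correct the last term so that the relation holds: then `elliptic_of_somos` shows that the
  -- corrected term satisfies the recursion defining `normEDS`, so that nothing was changed.
  let w := (normEDS b c d (n + 1) * normEDS b c d (n - 1) * b ^ 2 - c * normEDS b c d n ^ 2) /
    normEDS b c d (n - 2)
  let W := Function.update (normEDS b c d) (n + 2) w
  have hW (k : ℤ) (hk : k < n + 2) : W k = normEDS b c d k := Function.update_of_ne hk.ne ..
  have hWn : W (n + 2) = w := Function.update_self ..
  have hb : b ≠ 0 := normEDS_two b c d ▸ hne 2 (by lia)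
  have hw : W (n + 2) = normEDS b c d (n + 2) := by
    refine normEDS_eq_of_elliptic hb (by lia) hW fun l m hm hml hlm ↦ ?_
    rw [← hlm]
    refine elliptic_of_somos (M := n + 2) ?_ ?_ (fun k hk hkn ↦ ?_) (fun k hk hkn ↦ ?_)
      hm hml hlm.le
    · rw [hW _ (by lia), normEDS_zero]
    · rw [hW _ (by lia), normEDS_one]
    · rw [hW _ (by lia)]
      exact hne k hk
    · rw [hW (k - 2) (by lia), hW (k + 1) (by lia), hW (k - 1) (by lia), hW k (by lia),
        hW 2 (by lia), hW 3 (by lia), normEDS_two, normEDS_three]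
      obtain hkn | hkn := (show k ≤ n by lia).eq_or_lt
      · rw [hkn, hWn, div_mul_cancel₀ _ (hne _ (by lia))]
      · rw [hW _ (by lia), ih k hkn hk]
  rw [← hw, hWn, div_mul_cancel₀ _ (hne _ (by lia))]

theorem isEllipticSequence_normEDS_of_ne_zero {b c d : F}
    (hne : ∀ n : ℤ, 1 ≤ n → normEDS b c d n ≠ 0) : IsEllipticSequence (normEDS b c d) :=
  isEllipticSequence_of_forall_pos (normEDS_neg b c d) (normEDS_zero ..) (normEDS_one ..)
    fun _ _ hm hmn ↦ elliptic_of_somos (normEDS_zero ..) (normEDS_one ..) (fun k hk _ ↦ hne k hk)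
      (fun k hk _ ↦ by simpa using normEDS_somos hne hk) hm hmn le_rfl

end Field

theorem isEllipticSequence_normEDS {R : Type*} [CommRing R] (b c d : R) :
    IsEllipticSequence (normEDS b c d) := by
  let A := MvPolynomial (Fin 3) ℤ
  let ι := algebraMap A (FractionRing A)
  have hne (n : ℤ) (hn : 1 ≤ n) :
      normEDS (MvPolynomial.X 0 : A) (MvPolynomial.X 1) (MvPolynomial.X 2) n ≠ 0 := by
    intro h
    have h' := congr(MvPolynomial.eval ![2, 3, 2] $h)
    lift n to ℕ using by lia
    simp only [map_normEDS, MvPolynomial.eval_X, map_zero] at h'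
    have := (normEDS_two_three_two n).symm.trans h'
    lia
  have hgen : IsEllipticSequence
      (normEDS (MvPolynomial.X 0 : A) (MvPolynomial.X 1) (MvPolynomial.X 2)) := by
    have hι : Function.Injective ι := IsFractionRing.injective A (FractionRing A)
    have := isEllipticSequence_normEDS_of_ne_zero (F := FractionRing A)
      (b := ι (MvPolynomial.X 0)) (c := ι (MvPolynomial.X 1)) (d := ι (MvPolynomial.X 2))
      fun n hn ↦ by rw [← map_normEDS]; exact (map_ne_zero_iff ι hι).2 (hne n hn)
    intro p q r
    apply hι
    rw [IsEllipticNet.map_rel, map_zero, ← this p q r]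
    congr 1
    ext n
    exact map_normEDS ..
  intro p q r
  have := congr(MvPolynomial.aeval (R := ℤ) ![b, c, d] $(hgen p q r))
  rw [IsEllipticNet.map_rel, map_zero] at this
  rw [← this]
  congr 1
  ext n
  simp [map_normEDS]

end EllipticSequence

section DivisionPolynomialValues

variable {R : Type*} [CommRing R] {W : WeierstrassCurve R} {x y : R}

theorem eval_Ψ₂Sq_of_equation (h : W.toAffine.Equation x y) :
    W.Ψ₂Sq.eval x = (2 * y + W.a₁ * x + W.a₃) ^ 2 := by
  rw [Affine.equation_iff] at h
  simp only [Ψ₂Sq, b₂, b₄, b₆, eval_add, eval_mul, eval_C, eval_pow, eval_X]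
  linear_combination -4 * h

theorem eval_preΨ₄ (W : WeierstrassCurve R) (x : R) : W.preΨ₄.eval x =
    (6 * x ^ 2 + W.b₂ * x + W.b₄) * W.Ψ₃.eval x - W.Ψ₂Sq.eval x ^ 2 := by
  simp only [preΨ₄, Ψ₃, Ψ₂Sq, eval_add, eval_mul, eval_C, eval_pow, eval_X, eval_ofNat]
  linear_combination x ^ 2 * W.b_relation

theorem eval_Ψ₃_of_two_torsion (h : W.toAffine.Equation x y) (hy : 2 * y + W.a₁ * x + W.a₃ = 0) :
    W.Ψ₃.eval x = -(W.a₁ * y - (3 * x ^ 2 + 2 * W.a₂ * x + W.a₄)) ^ 2 := by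
  rw [Affine.equation_iff] at h
  simp only [Ψ₃, b₂, b₄, b₆, b₈, eval_add, eval_mul, eval_C, eval_pow, eval_X, eval_ofNat]
  linear_combination -(12 * x + W.a₁ ^ 2 + 4 * W.a₂) * h + ((3 * x + W.a₂) * W.a₃ + 6 * x * y +
    2 * W.a₂ * y - W.a₁ * W.a₄ + W.a₁ ^ 2 * y - W.a₁ * W.a₂ * x) * hy

/-- The value `ψₙ(x, y)` of the `n`-th division polynomial of `W` at the point `(x, y)`. -/
noncomputable def psiValue (W : WeierstrassCurve R) (x y : R) (n : ℤ) : R :=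
  (W.ψ n).evalEval x y

theorem psiValue_eq_normEDS (W : WeierstrassCurve R) (x y : R) : psiValue W x y =
    normEDS (2 * y + W.a₁ * x + W.a₃) (W.Ψ₃.eval x) (W.preΨ₄.eval x) := by
  ext n
  rw [psiValue, ← coe_evalEvalRingHom, WeierstrassCurve.ψ, map_normEDS]
  simp [ψ₂, Affine.polynomialY, add_assoc]

theorem psiValue_mul_psiValue (W : WeierstrassCurve R) (x y : R) (n m : ℤ) :
    psiValue W x y (n + m) * psiValue W x y (n - m) =
      psiValue W x y (n + 1) * psiValue W x y (n - 1) * psiValue W x y m ^ 2 -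
        psiValue W x y (m + 1) * psiValue W x y (m - 1) * psiValue W x y n ^ 2 := by
  rw [psiValue_eq_normEDS]
  have h := isEllipticSequence_normEDS (2 * y + W.a₁ * x + W.a₃) (W.Ψ₃.eval x)
    (W.preΨ₄.eval x) n m 1
  simp only [IsEllipticNet.rel, add_zero, normEDS_one] at h
  linear_combination h

@[simp]
theorem psiValue_zero (W : WeierstrassCurve R) (x y : R) : psiValue W x y 0 = 0 := by
  rw [psiValue_eq_normEDS, normEDS_zero]

@[simp]
theorem psiValue_one (W : WeierstrassCurve R) (x y : R) : psiValue W x y 1 = 1 := by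
  rw [psiValue_eq_normEDS, normEDS_one]

theorem psiValue_two (W : WeierstrassCurve R) (x y : R) :
    psiValue W x y 2 = 2 * y + W.a₁ * x + W.a₃ := by
  rw [psiValue_eq_normEDS, normEDS_two]

theorem psiValue_three (W : WeierstrassCurve R) (x y : R) : psiValue W x y 3 = W.Ψ₃.eval x := by
  rw [psiValue_eq_normEDS, normEDS_three]

theorem psiValue_four (W : WeierstrassCurve R) (x y : R) :
    psiValue W x y 4 = W.preΨ₄.eval x * psiValue W x y 2 := by
  rw [psiValue_eq_normEDS, normEDS_four, normEDS_two]

variable [IsDomain R]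

theorem psiValue_add_one_ne_zero (hP : W.toAffine.Nonsingular x y) {r : ℤ} (hr : 1 ≤ r)
    (hψr : psiValue W x y r = 0) (hψ : ∀ k, 1 ≤ k → k < r → psiValue W x y k ≠ 0) :
    psiValue W x y (r + 1) ≠ 0 := by
  obtain rfl | rfl | rfl | hr4 : r = 1 ∨ r = 2 ∨ r = 3 ∨ 4 ≤ r := by lia
  · simp at hψr
  · rw [psiValue_two] at hψr
    rw [show (2 : ℤ) + 1 = 3 by rfl, psiValue_three, eval_Ψ₃_of_two_torsion hP.1 hψr, neg_ne_zero]
    exact pow_ne_zero 2 (((Affine.nonsingular_iff' ..).1 hP).2.resolve_right (not_not.2 hψr))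
  · have h2 := hψ 2 (by lia) (by lia)
    rw [psiValue_three] at hψr
    rw [show (3 : ℤ) + 1 = 4 by rfl, psiValue_four, eval_preΨ₄, hψr, mul_zero, zero_sub,
      eval_Ψ₂Sq_of_equation hP.1, ← psiValue_two]
    exact mul_ne_zero (neg_ne_zero.2 (pow_ne_zero 2 (pow_ne_zero 2 h2))) h2
  · have hrel := psiValue_mul_psiValue W x y (r - 1) 2
    intro h
    rw [show r - 1 + 2 = r + 1 by ring, h, sub_add_cancel, hψr, show (2 : ℤ) - 1 = 1 by rfl,
      show (2 : ℤ) + 1 = 3 by rfl, psiValue_one, zero_mul, zero_mul, zero_mul, zero_sub, mul_one,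
      zero_eq_neg] at hrel
    exact mul_ne_zero (hψ 3 (by lia) (by lia)) (pow_ne_zero 2 (hψ (r - 1) (by lia) (by lia))) hrel

theorem dvd_of_psiValue_eq_zero (hP : W.toAffine.Nonsingular x y) {r n : ℤ} (hr : 1 ≤ r)
    (hψr : psiValue W x y r = 0) (hψ : ∀ k, 1 ≤ k → k < r → psiValue W x y k ≠ 0) (hn : 0 ≤ n)
    (hψn : psiValue W x y n = 0) : r ∣ n := by
  induction n using Int.strongRec (m := 0) with
  | lt n h => lia
  | ge n _ ih =>
  obtain hnr | hnr := lt_or_ge n r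
  · obtain rfl | hn := hn.eq_or_lt
    · exact dvd_zero r
    · exact absurd hψn (hψ n hn hnr)
  have hr2 : r ≠ 1 := by
    rintro rfl
    simp at hψr
  have hrel := psiValue_mul_psiValue W x y (n - r) r
  rw [sub_add_cancel, hψn, hψr, zero_mul, zero_pow two_ne_zero, mul_zero, zero_sub, zero_eq_neg]
    at hrel
  have := (mul_eq_zero.1 hrel).resolve_left (mul_ne_zero (psiValue_add_one_ne_zero hP hr hψr hψ)
    (hψ (r - 1) (by lia) (by lia)))
  exact dvd_sub_self_right.1 (ih (n - r) (by lia) (by lia) ((pow_eq_zero_iff two_ne_zero).1 this))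

end DivisionPolynomialValues

section Torsion

variable {F : Type*} [Field F] [DecidableEq F] {W : WeierstrassCurve F} {x y u v : F}

theorem sq_mul_sub_addX_slope (hx : u ≠ x) (w : F) :
    (x - u) ^ 2 * (x - W.toAffine.addX u x (W.toAffine.slope u x v w)) =
      (2 * x + u + W.a₂) * (u - x) ^ 2 - (v - w) ^ 2 - W.a₁ * (v - w) * (u - x) := by
  have := sub_ne_zero.2 hx
  rw [Affine.slope_of_X_ne hx, Affine.addX]
  field_simp
  ring

variable {hP : W.toAffine.Nonsingular x y} {hQ : W.toAffine.Nonsingular u v}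
  {u₁ v₁ u₂ v₂ : F} {h₁ : W.toAffine.Nonsingular u₁ v₁} {h₂ : W.toAffine.Nonsingular u₂ v₂}

theorem X_eq_addX_of_add_eq (hx : u ≠ x)
    (hadd : Affine.Point.some u v hQ + .some x y hP = .some u₁ v₁ h₁) :
    u₁ = W.toAffine.addX u x (W.toAffine.slope u x v y) := by
  rw [Affine.Point.add_of_X_ne hx] at hadd
  exact (Affine.Point.some.inj hadd).1.symm

theorem X_eq_addX_of_sub_eq (hx : u ≠ x)
    (hsub : Affine.Point.some u v hQ - .some x y hP = .some u₂ v₂ h₂) :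
    u₂ = W.toAffine.addX u x (W.toAffine.slope u x v (W.toAffine.negY x y)) := by
  rw [sub_eq_add_neg, Affine.Point.neg_some] at hsub
  exact X_eq_addX_of_add_eq hx hsub

theorem sub_X_add_mul_sub_X_sub (hx : u ≠ x)
    (hadd : Affine.Point.some u v hQ + .some x y hP = .some u₁ v₁ h₁)
    (hsub : Affine.Point.some u v hQ - .some x y hP = .some u₂ v₂ h₂) :
    (x - u) ^ 2 * ((x - u₁) * (x - u₂)) = W.Ψ₂Sq.eval x * (x - u) - W.Ψ₃.eval x := by
  have e := (Affine.equation_iff ..).1 hP.1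
  have e' := (Affine.equation_iff ..).1 hQ.1
  rw [X_eq_addX_of_add_eq hx hadd, X_eq_addX_of_sub_eq hx hsub]
  apply mul_left_cancel₀ (pow_ne_zero 2 (sub_ne_zero.2 hx.symm))
  rw [← mul_assoc, mul_mul_mul_comm, sq_mul_sub_addX_slope hx, sq_mul_sub_addX_slope hx]
  simp only [Affine.negY, Ψ₂Sq, Ψ₃, b₂, b₄, b₆, b₈, eval_add, eval_mul, eval_C, eval_pow, eval_X,
    eval_ofNat]
  linear_combination
    -(2 * (2 * x + u + W.a₂) + W.a₁ ^ 2) * (u - x) ^ 2 * e' -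
      2 * (2 * x + u + W.a₂) * (u - x) ^ 2 * e +
      (v ^ 2 + W.a₁ * u * v + W.a₃ * v - (y ^ 2 + W.a₁ * x * y + W.a₃ * y) +
        (u ^ 3 + W.a₂ * u ^ 2 + W.a₄ * u) - (x ^ 3 + W.a₂ * x ^ 2 + W.a₄ * x) +
        W.a₁ * (u - x) * (W.a₁ * u + W.a₃)) * (e' - e)

theorem sub_X_add_add_sub_X_sub (hx : u ≠ x)
    (hadd : Affine.Point.some u v hQ + .some x y hP = .some u₁ v₁ h₁)
    (hsub : Affine.Point.some u v hQ - .some x y hP = .some u₂ v₂ h₂) :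
    (x - u) ^ 2 * ((x - u₁) + (x - u₂)) =
      (6 * x ^ 2 + W.b₂ * x + W.b₄) * (x - u) - W.Ψ₂Sq.eval x := by
  have e := (Affine.equation_iff ..).1 hP.1
  have e' := (Affine.equation_iff ..).1 hQ.1
  rw [X_eq_addX_of_add_eq hx hadd, X_eq_addX_of_sub_eq hx hsub, mul_add,
    sq_mul_sub_addX_slope hx, sq_mul_sub_addX_slope hx]
  simp only [Affine.negY, Ψ₂Sq, b₂, b₄, b₆, eval_add, eval_mul, eval_C, eval_pow, eval_X]
  linear_combination -2 * e' - 2 * e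

theorem exists_add_eq_some (hP : W.toAffine.Nonsingular x y) (hQ : W.toAffine.Nonsingular u v)
    (hx : u ≠ x) : ∃ (u₁ v₁ : F) (h₁ : W.toAffine.Nonsingular u₁ v₁),
      Affine.Point.some u v hQ + .some x y hP = .some u₁ v₁ h₁ :=
  ⟨_, _, _, Affine.Point.add_of_X_ne hx⟩

theorem exists_two_zsmul_eq_some (hP : W.toAffine.Nonsingular x y)
    (hy : 2 * y + W.a₁ * x + W.a₃ ≠ 0) :
    ∃ (u v : F) (h : W.toAffine.Nonsingular u v),
      (2 : ℤ) • Affine.Point.some x y hP = .some u v h ∧ (x - u) * W.Ψ₂Sq.eval x = W.Ψ₃.eval x := by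
  have e := (Affine.equation_iff ..).1 hP.1
  have hneg : y - W.toAffine.negY x y = 2 * y + W.a₁ * x + W.a₃ := by rw [Affine.negY]; ring
  have hne : y ≠ W.toAffine.negY x y := sub_ne_zero.1 (hneg ▸ hy)
  refine ⟨_, _, _, by rw [two_zsmul, Affine.Point.add_self_of_Y_ne hne], ?_⟩
  have hslope := Affine.slope_of_Y_ne (W := W.toAffine) (x₁ := x) rfl hne
  rw [hneg, eq_div_iff hy] at hslope
  rw [eval_Ψ₂Sq_of_equation hP.1, Affine.addX]
  simp only [Ψ₃, b₂, b₄, b₆, b₈, eval_add, eval_mul, eval_C, eval_pow, eval_X, eval_ofNat]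
  generalize W.toAffine.slope x x y y = ℓ at hslope ⊢
  set η := 2 * y + W.a₁ * x + W.a₃
  linear_combination -(ℓ * η + (3 * x ^ 2 + 2 * W.a₂ * x + W.a₄ - W.a₁ * y) + W.a₁ * η) * hslope
    + (12 * x + W.a₁ ^ 2 + 4 * W.a₂) * e

theorem sub_X_mul_psiValue_add_one_sq (hx : u ≠ x)
    (hadd : Affine.Point.some u v hQ + .some x y hP = .some u₁ v₁ h₁)
    (hsub : Affine.Point.some u v hQ - .some x y hP = .some u₂ v₂ h₂) {k : ℤ} (hk : 2 ≤ k)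
    (hψk : psiValue W x y k ≠ 0) (hψk' : 2 < k → psiValue W x y (k - 2) ≠ 0)
    (hu : (x - u) * psiValue W x y k ^ 2 = psiValue W x y (k + 1) * psiValue W x y (k - 1))
    (hu₂ : (x - u₂) * psiValue W x y (k - 1) ^ 2 =
      psiValue W x y (k - 1 + 1) * psiValue W x y (k - 1 - 1)) :
    (x - u₁) * psiValue W x y (k + 1) ^ 2 =
      psiValue W x y (k + 1 + 1) * psiValue W x y (k + 1 - 1) := by
  have hΨ₂ := eval_Ψ₂Sq_of_equation hP.1
  rw [← psiValue_two] at hΨ₂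
  obtain rfl | hk' := hk.eq_or_lt
  · have hsum := sub_X_add_add_sub_X_sub hx hadd hsub
    obtain rfl : x = u₂ := by simpa [sub_eq_zero] using hu₂
    simp only [hΨ₂, Int.reduceAdd, Int.reduceSub, psiValue_one, psiValue_three, psiValue_four,
      eval_preΨ₄] at hu hsum ⊢
    linear_combination (psiValue W x y 2 ^ 4) * hsum + ((u₁ - x) * (
      W.Ψ₃.eval x + (x - u) * psiValue W x y 2 ^ 2) +
        (6 * x ^ 2 + W.b₂ * x + W.b₄) * psiValue W x y 2 ^ 2) * hu
  · have hprod := sub_X_add_mul_sub_X_sub hx hadd hsub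
    have hrel := psiValue_mul_psiValue W x y k 2
    simp only [hΨ₂, Int.reduceAdd, Int.reduceSub, psiValue_one, psiValue_three, sub_add_cancel,
      add_sub_cancel_right, sub_sub, add_assoc] at hprod hrel hu hu₂ ⊢
    apply mul_right_cancel₀
      (mul_ne_zero hψk (hψk' hk'))
    linear_combination psiValue W x y k ^ 4 * hprod - psiValue W x y k ^ 2 * hrel -
      (x - u₁) * psiValue W x y (k + 1) ^ 2 * hu₂ + (psiValue W x y 2 ^ 2 * psiValue W x y k ^ 2 -
        (x - u₁) * (x - u₂) * ((x - u) * psiValue W x y k ^ 2 +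
          psiValue W x y (k + 1) * psiValue W x y (k - 1))) * hu

theorem exists_zsmul_eq_some (hP : W.toAffine.Nonsingular x y) {n : ℤ} (hn : 1 ≤ n)
    (hψ : ∀ k, 1 ≤ k → k ≤ n → psiValue W x y k ≠ 0) :
    ∃ (u v : F) (h : W.toAffine.Nonsingular u v), n • Affine.Point.some x y hP = .some u v h ∧
      (x - u) * psiValue W x y n ^ 2 = psiValue W x y (n + 1) * psiValue W x y (n - 1) := by
  induction n using Int.strongRec (m := 1) with
  | lt n h => lia
  | ge n _ ih =>
  obtain rfl | rfl | ⟨k, hk, rfl⟩ : n = 1 ∨ n = 2 ∨ ∃ k, 2 ≤ k ∧ n = k + 1 := by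
    by_cases 3 ≤ n
    · exact .inr (.inr ⟨n - 1, by lia, by lia⟩)
    · lia
  · exact ⟨x, y, hP, one_zsmul _, by simp⟩
  · obtain ⟨u, v, h, hadd, hx⟩ :=
      exists_two_zsmul_eq_some hP (psiValue_two W x y ▸ hψ 2 (by lia) le_rfl)
    exact ⟨u, v, h, hadd, by
      simpa [psiValue_two, psiValue_three, eval_Ψ₂Sq_of_equation hP.1] using hx⟩
  obtain ⟨u, v, hQ, hkP, hu⟩ := ih k (by lia) (by lia) fun j _ _ ↦ hψ j (by lia) (by lia)
  obtain ⟨u₂, v₂, h₂, hsub, hu₂⟩ :=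
    ih (k - 1) (by lia) (by lia) fun j _ _ ↦ hψ j (by lia) (by lia)
  rw [sub_one_zsmul, hkP, ← sub_eq_add_neg] at hsub
  have hxu : u ≠ x := by
    rintro rfl
    rw [sub_self, zero_mul] at hu
    exact mul_ne_zero (hψ (k + 1) (by lia) (by lia)) (hψ (k - 1) (by lia) (by lia)) hu.symm
  obtain ⟨u₁, v₁, h₁, hadd⟩ := exists_add_eq_some hP hQ hxu
  refine ⟨u₁, v₁, h₁, by rw [add_one_zsmul, hkP, hadd], ?_⟩
  exact sub_X_mul_psiValue_add_one_sq hxu hadd hsub hk (hψ k (by lia) (by lia))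
    (fun _ ↦ hψ (k - 2) (by lia) (by lia)) hu hu₂

theorem zsmul_eq_zero_of_forall_lt_ne_zero (hP : W.toAffine.Nonsingular x y) {r : ℤ} (hr : 1 ≤ r)
    (hψr : psiValue W x y r = 0) (hψ : ∀ k, 1 ≤ k → k < r → psiValue W x y k ≠ 0) :
    r • Affine.Point.some x y hP = 0 := by
  obtain rfl | rfl | hr3 : r = 1 ∨ r = 2 ∨ 3 ≤ r := by lia
  · simp at hψr
  · rw [psiValue_two] at hψr
    rw [two_zsmul, Affine.Point.add_self_of_Y_eq]
    rw [Affine.negY]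
    linear_combination hψr
  obtain ⟨u, v, h, hmul, hu⟩ :=
    exists_zsmul_eq_some hP (n := r - 1) (by lia) fun k _ _ ↦ hψ k (by lia) (by lia)
  obtain ⟨u', v', h', hmul', -⟩ :=
    exists_zsmul_eq_some hP (n := r - 2) (by lia) fun k _ _ ↦ hψ k (by lia) (by lia)
  have hxu : x - u = 0 := by
    rw [sub_add_cancel, hψr, zero_mul] at hu
    exact (mul_eq_zero.1 hu).resolve_right (pow_ne_zero 2 (hψ _ (by lia) (by lia)))
  obtain rfl := sub_eq_zero.1 hxu
  obtain rfl | rfl := Affine.Y_eq_of_X_eq h.1 hP.1 rfl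
  · rw [show r - 2 = r - 1 - 1 by ring, sub_one_zsmul, hmul, add_neg_cancel] at hmul'
    cases hmul'
  · rw [← sub_add_cancel r 1, add_one_zsmul, hmul, ← Affine.Point.neg_some hP, neg_add_cancel]

theorem zsmul_eq_zero_of_psiValue_eq_zero (hP : W.toAffine.Nonsingular x y) {n : ℤ} (hn : 1 ≤ n)
    (hψ : psiValue W x y n = 0) : n • Affine.Point.some x y hP = 0 := by
  obtain ⟨r, ⟨hr, hψr⟩, hmin⟩ := Int.exists_least_of_bdd
    (P := fun k ↦ 1 ≤ k ∧ psiValue W x y k = 0) ⟨1, fun _ h ↦ h.1⟩ ⟨n, hn, hψ⟩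
  have hne (k : ℤ) (hk : 1 ≤ k) (hkr : k < r) : psiValue W x y k ≠ 0 :=
    fun h ↦ hkr.not_ge (hmin k ⟨hk, h⟩)
  obtain ⟨k, rfl⟩ := dvd_of_psiValue_eq_zero hP hr hψr hne (by lia) hψ
  rw [mul_comm, mul_zsmul, zsmul_eq_zero_of_forall_lt_ne_zero hP hr hψr hne, zsmul_zero]

theorem zsmul_eq_zero_of_eval_preΨ_eq_zero (hP : W.toAffine.Nonsingular x y) {n : ℤ} (hn : 1 ≤ n)
    (h : (W.preΨ n).eval x = 0) : n • Affine.Point.some x y hP = 0 := by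
  refine zsmul_eq_zero_of_psiValue_eq_zero hP hn ?_
  rw [← coe_evalRingHom, preΨ, map_preNormEDS] at h
  simp only [coe_evalRingHom, eval_pow, eval_Ψ₂Sq_of_equation hP.1, ← pow_mul] at h
  rw [psiValue_eq_normEDS, normEDS, h, zero_mul]

end Torsion

section Derivation

variable {k A : Type*} [Field k] [CommRing A] [Algebra k A] (p : ℕ) [Fact p.Prime] [CharP k p]

theorem derivation_iterate_char_mul (D : Derivation k A A) (a b : A) :
    D^[p] (a * b) = a * D^[p] b + D^[p] a * b := by
  nontriviality A
  let T : Module.End k A := D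
  let L : Module.End k (Module.End k A) := LinearMap.mulLeft k T
  let R : Module.End k (Module.End k A) := LinearMap.mulRight k T
  have : CharP (Module.End k (Module.End k A)) p :=
    charP_of_injective_algebraMap (algebraMap k _).injective p
  -- The operator `T ↦ DT - TD` maps multiplication by `a` to multiplication by `D a`.
  have hpow (n : ℕ) : ((L - R) ^ n) (LinearMap.mulLeft k a) = LinearMap.mulLeft k (D^[n] a) := by
    induction n with
    | zero => rfl
    | succ n ih =>
      rw [pow_succ', Module.End.mul_apply, ih, Function.iterate_succ_apply']
      ext c
      simp only [L, R, T, LinearMap.sub_apply, LinearMap.mulLeft_apply, LinearMap.mulRight_apply,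
        Module.End.mul_apply, Derivation.coeFn_coe, Derivation.leibniz, smul_eq_mul]
      ring
  have hsub : (L - R) ^ p = L ^ p - R ^ p :=
    sub_pow_char_of_commute (R := Module.End k (Module.End k A)) p
      (LinearMap.commute_mulLeft_right T T)
  have hp := hpow p
  rw [hsub, LinearMap.pow_mulLeft, LinearMap.pow_mulRight] at hp
  have h := LinearMap.congr_fun hp b
  simp only [LinearMap.sub_apply, LinearMap.mulLeft_apply, LinearMap.mulRight_apply,
    Module.End.mul_apply, Module.End.pow_apply, T, Derivation.coeFn_coe] at h
  linear_combination h

theorem derivation_iterate_char_eq_mul_derivative (D : Derivation k k[X] k[X]) (F : k[X]) :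
    D^[p] F = D^[p] X * derivative F := by
  let Δ : Derivation k k[X] k[X] := .mk' ((D : k[X] →ₗ[k] k[X]) ^ p) fun a b ↦ by
    simpa [Module.End.pow_apply, mul_comm b] using derivation_iterate_char_mul p D a b
  have hΔ (G : k[X]) : Δ G = D^[p] G := Module.End.pow_apply ..
  have hX : Δ = mkDerivation k (Δ X) := derivation_ext (mkDerivation_X k _).symm
  have := congr($hX F)
  rwa [mkDerivation_apply, hΔ, hΔ, smul_eq_mul, mul_comm] at this

theorem derivation_iterate_char_eq_zero {D : Derivation k k[X] k[X]} {F : k[X]}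
    (hF : derivative F ≠ 0) (hD : D (D F) = 0) (G : k[X]) : D^[p] G = 0 := by
  have hp : D^[p] F = 0 := by
    obtain ⟨n, hn⟩ := Nat.exists_eq_add_of_le' (Fact.out : p.Prime).two_le
    rw [hn, Function.iterate_add_apply, Function.iterate_succ_apply, Function.iterate_one, hD,
      iterate_map_zero]
  rw [derivation_iterate_char_eq_mul_derivative] at hp ⊢
  rw [(mul_eq_zero.1 hp).resolve_right hF, zero_mul]

omit [Fact p.Prime] [CharP k p] in
theorem derivation_iterate_two_mul_of_eigenvector {D : Derivation k A A} {a K : A} (hK : D K = 0)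
    (ha : D (D a) = K * a) (n : ℕ) : D^[2 * n] a = K ^ n * a := by
  induction n with
  | zero => simp
  | succ n ih =>
    have hKn : D (K ^ n) = 0 := by rw [Derivation.leibniz_pow, hK, smul_zero, smul_zero]
    rw [mul_add_one, add_comm, Function.iterate_add_apply, ih, Function.iterate_succ_apply,
      Function.iterate_one, D.leibniz, hKn, smul_zero, add_zero, smul_eq_mul, D.leibniz,
      hKn, smul_zero, add_zero, ha, smul_eq_mul, pow_succ, mul_assoc]

end Derivation

section DifferentialEquation

variable {k : Type*} [Field k] {p m : ℕ} [Fact p.Prime] [CharP k p]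

theorem eq_zero_of_differential_equation (hm : 2 * m + 1 = p) {f F A : k[X]} {κ : k}
    (hκ : κ ≠ 0) (hf : f ≠ 0) (hF : derivative F = f ^ m)
    (hode : 2 * f * derivative (derivative A) + derivative f * derivative A = 2 * C κ * A) :
    A = 0 := by
  set w := f ^ (m * (p - 1)) with hw
  set g := f ^ (p - 2) with hg
  have hp := (Fact.out : p.Prime).two_le
  have h2 : (2 : k[X]) ≠ 0 := by
    exact_mod_cast CharP.cast_ne_zero_of_ne_of_prime k[X] Nat.prime_two (p := p) (by lia)
  have hw2 : w ^ 2 = g ^ p * f := by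
    rw [hw, hg, ← pow_mul, ← pow_mul, ← pow_succ]
    congr 1
    obtain ⟨j, rfl⟩ : ∃ j, m = j + 1 := ⟨m - 1, by lia⟩
    rw [← hm, show 2 * (j + 1) + 1 - 1 = 2 * j + 2 by lia,
      show 2 * (j + 1) + 1 - 2 = 2 * j + 1 by lia]
    ring
  have hgp (q : k[X]) : derivative (q ^ p) = 0 := by simp [derivative_pow]
  have hw2' : 2 * w * derivative w = g ^ p * derivative f := by
    have := congr(derivative $hw2)
    rw [derivative_pow, derivative_mul, hgp] at this
    simpa [← map_ofNat C] using this
  let D : Derivation k k[X] k[X] := mkDerivation k w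
  have hD (q : k[X]) : D q = w * derivative q := by
    rw [mkDerivation_apply, smul_eq_mul, mul_comm]
  have hDDF : D (D F) = 0 := by
    rw [hD F, hF, hw, ← pow_add, ← mul_add_one, Nat.sub_add_cancel (by lia), pow_mul, hD,
      hgp, mul_zero]
  have hDK : D (g ^ p * C κ) = 0 := by
    rw [hD, derivative_mul, hgp, derivative_C]
    ring
  have hDDA : D (D A) = g ^ p * C κ * A := by
    apply mul_left_cancel₀ h2
    simp only [hD, derivative_mul]
    linear_combination derivative A * hw2' + 2 * derivative (derivative A) * hw2 + g ^ p * hode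
  have h := derivation_iterate_two_mul_of_eigenvector hDK hDDA p
  rw [two_mul, Function.iterate_add_apply,
    derivation_iterate_char_eq_zero p (hF ▸ pow_ne_zero m hf) hDDF] at h
  refine (mul_eq_zero.1 h.symm).resolve_left (pow_ne_zero _ (mul_ne_zero ?_ (C_ne_zero.2 hκ)))
  exact pow_ne_zero _ (pow_ne_zero _ hf)

end DifferentialEquation

section CoordinateRing

open Affine Affine.CoordinateRing

section Conjugation

variable {R : Type*} [CommRing R] (W : Affine R)

theorem polynomial_comp_negPolynomial : W.polynomial.comp W.negPolynomial = W.polynomial := by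
  simp only [Affine.polynomial, Affine.negPolynomial, add_comp, sub_comp, pow_comp, mul_comp,
    X_comp, C_comp]
  ring

theorem eval₂_mk_negPolynomial (q : R[X][X]) :
    q.eval₂ (algebraMap R[X] W.CoordinateRing) (CoordinateRing.mk W W.negPolynomial) =
      CoordinateRing.mk W (q.comp W.negPolynomial) :=
  (hom_eval₂ q C (CoordinateRing.mk W) W.negPolynomial).symm

/-- The conjugation of the coordinate ring `R[W]` over `R[X]`: the comorphism of the negation
`(x, y) ↦ (x, -y - a₁x - a₃)` of `W`. -/
noncomputable def coordinateRingConj : W.CoordinateRing →+* W.CoordinateRing :=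
  AdjoinRoot.lift (algebraMap R[X] W.CoordinateRing) (CoordinateRing.mk W W.negPolynomial) <| by
    rw [eval₂_mk_negPolynomial, polynomial_comp_negPolynomial]
    exact AdjoinRoot.mk_self

theorem coordinateRingConj_mk (q : R[X][X]) : coordinateRingConj W (CoordinateRing.mk W q) =
    CoordinateRing.mk W (q.comp W.negPolynomial) :=
  (AdjoinRoot.lift_mk _ q).trans (eval₂_mk_negPolynomial W q)

theorem mul_coordinateRingConj (g : W.CoordinateRing) :
    g * coordinateRingConj W g = algebraMap R[X] W.CoordinateRing (Algebra.norm R[X] g) := by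
  obtain ⟨A, B, rfl⟩ := exists_smul_basis_eq g
  refine Eq.trans ?_ (coe_norm_smul_basis A B).symm
  rw [Affine.CoordinateRing.smul, Affine.CoordinateRing.smul, mul_one, ← map_mul, ← map_add,
    coordinateRingConj_mk, ← map_mul]
  simp [Affine.negPolynomial]

theorem map_coordinateRingConj_XYIdeal (x y : R) :
    (XYIdeal W x (C y)).map (coordinateRingConj W) = XYIdeal W x (C (W.negY x y)) := by
  have hX : coordinateRingConj W (XClass W x) = XClass W x := by
    rw [XClass, coordinateRingConj_mk, C_comp]
  have hY : coordinateRingConj W (YClass W (C y)) =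
      -YClass W (C (W.negY x y)) + CoordinateRing.mk W (C (-C W.a₁)) * XClass W x := by
    rw [YClass, YClass, XClass, coordinateRingConj_mk, ← map_neg, ← map_mul, ← map_add]
    congr 1
    simp only [Affine.negPolynomial, Affine.negY, sub_comp, X_comp, C_comp, map_add, map_sub,
      map_neg, map_mul]
    ring
  rw [XYIdeal, XYIdeal, Ideal.map_span, Set.image_pair, hX, hY, Ideal.span_pair_add_mul_left,
    Ideal.span_insert, Ideal.span_insert, Ideal.span_singleton_neg]

end Conjugation

section Field

variable {F : Type*} [Field F] {W : Affine F} {x y : F}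

theorem XYIdeal_isPrime (h : W.Equation x y) : (XYIdeal W x (C y)).IsPrime := by
  have e : (W.polynomial.eval (C y)).eval x = 0 := h
  have := (quotientXYIdealEquiv e).toMulEquiv.isDomain
  exact (Ideal.Quotient.isDomain_iff_prime _).1 this

theorem exists_span_eq_XYIdeal_pow [DecidableEq F] (h : W.Nonsingular x y) {n : ℕ}
    (hn : n • Affine.Point.some x y h = 0) :
    ∃ g : W.CoordinateRing, Ideal.span {g} = XYIdeal W x (C y) ^ n := by
  have hcl := congr(Affine.Point.toClass $hn)
  rw [map_nsmul, Affine.Point.toClass_some, map_zero] at hcl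
  have hmk : ClassGroup.mk W.FunctionField (XYIdeal' h ^ n) = 1 := by
    rw [map_pow]
    exact hcl
  have hI : ((XYIdeal' h ^ n : (FractionalIdeal (nonZeroDivisors W.CoordinateRing)
      W.FunctionField)ˣ) : FractionalIdeal (nonZeroDivisors W.CoordinateRing) W.FunctionField) =
      ((XYIdeal W x (C y) ^ n : Ideal W.CoordinateRing)) := by
    rw [Units.val_pow_eq_pow_val, XYIdeal'_eq, FractionalIdeal.coeIdeal_pow]
  obtain ⟨g, -, hg⟩ := (ClassGroup.mk_eq_one_of_coe_ideal hI).1 hmk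
  exact ⟨g, hg.symm⟩

theorem associated_norm_X_sub_C_pow (h : W.Nonsingular x y) {n : ℕ} {g : W.CoordinateRing}
    (hg : Ideal.span {g} = XYIdeal W x (C y) ^ n) :
    Associated (Algebra.norm F[X] g) ((X - C x) ^ n) := by
  have hmap : Ideal.map (algebraMap F[X] W.CoordinateRing) (Ideal.span {Algebra.norm F[X] g}) =
      Ideal.map (algebraMap F[X] W.CoordinateRing) (Ideal.span {(X - C x) ^ n}) := by
    rw [Ideal.map_span, Set.image_singleton, ← mul_coordinateRingConj,
      ← Ideal.span_singleton_mul_span_singleton, ← Set.image_singleton, ← Ideal.map_span, hg,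
      Ideal.map_pow, map_coordinateRingConj_XYIdeal, ← mul_pow, mul_comm, XYIdeal_neg_mul h,
      XIdeal, Ideal.span_singleton_pow, Ideal.map_span, Set.image_singleton, map_pow]
    rfl
  rw [← Ideal.span_singleton_eq_span_singleton,
    ← Ideal.comap_map_eq_self_of_faithfullyFlat (B := W.CoordinateRing) (Ideal.span {_}), hmap,
    Ideal.comap_map_eq_self_of_faithfullyFlat]

theorem not_XClass_dvd (h : W.Nonsingular x y) (hy : y ≠ W.negY x y) {n : ℕ}
    {g : W.CoordinateRing} (hg : Ideal.span {g} = XYIdeal W x (C y) ^ n) :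
    ¬ XClass W x ∣ g := by
  intro hdvd
  have hprime := XYIdeal_isPrime (W := W) (W.equation_neg x y |>.2 h.1)
  have hle : XYIdeal W x (C y) ≤ XYIdeal W x (C (W.negY x y)) := by
    refine Ideal.IsPrime.le_of_pow_le (n := n) ?_
    rw [← hg, Ideal.span_singleton_le_iff_mem]
    exact Ideal.mem_of_dvd _ hdvd (Ideal.subset_span (by simp))
  have hmem : YClass W (C (W.negY x y)) - YClass W (C y) ∈ XYIdeal W x (C (W.negY x y)) :=
    sub_mem (Ideal.subset_span (by simp)) (hle (Ideal.subset_span (by simp)))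
  refine hprime.ne_top (Ideal.eq_top_of_isUnit_mem _ hmem ?_)
  rw [YClass, YClass, ← map_sub, sub_sub_sub_cancel_left, ← map_sub, ← map_sub]
  exact (((isUnit_iff_ne_zero.2 (sub_ne_zero.2 hy)).map C).map C).map _

end Field

end CoordinateRing

section SupersingularTorsion

variable {k : Type*} [Field k] {W : Affine k} {x y : k}

/-- The cubic `f` in the equation `y² = f(x)` of a Weierstrass curve with `a₁ = a₃ = 0`. -/
noncomputable def weierstrassCubic (W : Affine k) : k[X] :=
  X ^ 3 + C W.a₂ * X ^ 2 + C W.a₄ * X + C W.a₆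

theorem natDegree_weierstrassCubic (W : Affine k) : (weierstrassCubic W).natDegree = 3 := by
  rw [weierstrassCubic]
  compute_degree!

theorem norm_smul_basis_of_isCharNeTwoNF [W.IsCharNeTwoNF] (A B : k[X]) :
    Algebra.norm k[X] (A • (1 : W.CoordinateRing) + B • Affine.CoordinateRing.mk W X) =
      A ^ 2 - weierstrassCubic W * B ^ 2 := by
  rw [Affine.CoordinateRing.norm_smul_basis, a₁_of_isCharNeTwoNF, a₃_of_isCharNeTwoNF,
    weierstrassCubic, C_0]
  ring

theorem exists_isCoprime_sq_sub_eq_of_nsmul_eq_zero [DecidableEq k] [W.IsCharNeTwoNF]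
    (h : W.Nonsingular x y) (hy : y ≠ W.negY x y) {n : ℕ}
    (hn : n • Affine.Point.some x y h = 0) :
    ∃ (A B : k[X]) (c : k), c ≠ 0 ∧ IsCoprime A B ∧
      A ^ 2 - weierstrassCubic W * B ^ 2 = C c * (X - C x) ^ n := by
  obtain ⟨g, hg⟩ := exists_span_eq_XYIdeal_pow h hn
  obtain ⟨u, hu⟩ := (associated_norm_X_sub_C_pow h hg).symm
  obtain ⟨c, hc, hcu⟩ := Polynomial.isUnit_iff.1 u.isUnit
  have hndvd := not_XClass_dvd h hy hg
  obtain ⟨A, B, rfl⟩ := Affine.CoordinateRing.exists_smul_basis_eq g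
  rw [norm_smul_basis_of_isCharNeTwoNF, ← hcu, mul_comm] at hu
  have hcop : ¬ (X - C x ∣ A ∧ X - C x ∣ B) := by
    rintro ⟨⟨A, rfl⟩, B, rfl⟩
    refine hndvd ⟨A • 1 + B • Affine.CoordinateRing.mk W X, ?_⟩
    simp only [mul_smul, ← smul_add, Affine.CoordinateRing.smul _ (_ + _)]
    rfl
  refine ⟨A, B, c, hc.ne_zero, isCoprime_of_prime_dvd ?_ fun z hz hzA hzB ↦ hcop ?_, hu.symm⟩
  · rintro ⟨rfl, rfl⟩
    simp at hcop
  · have hzd : z ∣ C c * (X - C x) ^ n :=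
      hu ▸ dvd_sub (dvd_pow hzA two_ne_zero) (dvd_mul_of_dvd_right (dvd_pow hzB two_ne_zero) _)
    have hzx := hz.dvd_of_dvd_pow ((Polynomial.dvd_C_mul hc.ne_zero).1 hzd)
    have := (hz.irreducible.associated_of_dvd (irreducible_X_sub_C x) hzx).symm.dvd
    exact ⟨this.trans hzA, this.trans hzB⟩

theorem natDegree_sq_sub_mul_sq {f A B : k[X]} (hf : f.natDegree = 3) (hB : B ≠ 0) :
    (A ^ 2 - f * B ^ 2).natDegree = max (2 * A.natDegree) (2 * B.natDegree + 3) := by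
  have hf0 : f ≠ 0 := ne_zero_of_natDegree_gt (n := 2) (by lia)
  have hA2 : (A ^ 2).natDegree = 2 * A.natDegree := natDegree_pow A 2
  have hB2 : (f * B ^ 2).natDegree = 2 * B.natDegree + 3 := by
    rw [natDegree_mul hf0 (pow_ne_zero 2 hB), natDegree_pow, hf, add_comm]
  obtain h | h : 2 * A.natDegree < 2 * B.natDegree + 3 ∨ 2 * B.natDegree + 3 < 2 * A.natDegree := by
    lia
  · rw [natDegree_sub_eq_right_of_natDegree_lt (by lia), hB2, max_eq_right h.le]
  · rw [natDegree_sub_eq_left_of_natDegree_lt (by lia), hA2, max_eq_left h.le]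

theorem natDegree_le_of_natDegree_sq_sub_mul_sq_eq {f A B : k[X]} {m : ℕ} (hf : f.natDegree = 3)
    (h : (A ^ 2 - f * B ^ 2).natDegree = 2 * m + 1) :
    A.natDegree ≤ m ∧ B ≠ 0 ∧ B.natDegree + 1 = m := by
  have hB : B ≠ 0 := by
    rintro rfl
    rw [zero_pow two_ne_zero, mul_zero, sub_zero, natDegree_pow] at h
    lia
  rw [natDegree_sq_sub_mul_sq hf hB] at h
  exact ⟨by lia, hB, by lia⟩

theorem exists_derivative_eq_mul_of_sq_sub_eq {f A B q : k[X]} (h2 : (2 : k) ≠ 0)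
    (hAB : IsCoprime A B) (hB : B ≠ 0) (hq : derivative q = 0) (h : A ^ 2 - f * B ^ 2 = q) :
    ∃ E, derivative A = B * E ∧ 2 * f * derivative B + derivative f * B = 2 * A * E := by
  have hd : A * (C 2 * derivative A) = B * (2 * f * derivative B + derivative f * B) := by
    have := congr(derivative $h)
    simp only [hq, derivative_sub, derivative_mul, derivative_pow, Nat.add_one_sub_one, pow_one,
      Nat.cast_ofNat, C_ofNat] at this
    rw [C_ofNat]
    linear_combination this
  obtain ⟨E, hE⟩ : B ∣ derivative A :=
    (Polynomial.dvd_C_mul h2).1 (hAB.symm.dvd_of_dvd_mul_left ⟨_, hd⟩)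
  refine ⟨E, hE, mul_left_cancel₀ hB ?_⟩
  rw [← hd, hE, C_ofNat]
  ring

theorem natDegree_eq_zero_of_derivative_eq_zero_of_lt {p : ℕ} [CharP k p] {A : k[X]}
    (h : derivative A = 0) (hA : A.natDegree < p) : A.natDegree = 0 := by
  by_contra hne
  have hcoeff := congr(coeff $h (A.natDegree - 1))
  rw [coeff_derivative, ← Nat.cast_add_one, Nat.sub_add_cancel (Nat.pos_of_ne_zero hne), coeff_zero,
    mul_eq_zero, coeff_natDegree, leadingCoeff_eq_zero, CharP.cast_eq_zero_iff k p] at hcoeff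
  obtain rfl | hdvd := hcoeff
  · exact hne natDegree_zero
  · exact hne (Nat.eq_zero_of_dvd_of_lt hdvd hA)

variable {p m : ℕ} [Fact p.Prime] [CharP k p]

theorem natDegree_ne_zero_of_sq_sub_mul_sq_eq {f A B : k[X]} {c e₁ e₂ : k}
    (h : A ^ 2 - f * B ^ 2 = C c * (X - C x) ^ p) (hc : c ≠ 0) (he : e₁ ≠ e₂)
    (he₁ : f.IsRoot e₁) (he₂ : f.IsRoot e₂) : A.natDegree ≠ 0 := by
  intro hA
  obtain ⟨a, rfl⟩ := natDegree_eq_zero.1 hA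
  have h₁ := congr(eval e₁ $h)
  have h₂ := congr(eval e₂ $h)
  simp only [eval_sub, eval_mul, eval_pow, eval_C, eval_X, he₁.eq_zero, he₂.eq_zero, zero_mul,
    sub_zero] at h₁ h₂
  have := frobenius_inj k p (mul_left_cancel₀ hc (h₁.symm.trans h₂))
  exact he (sub_left_injective this)

theorem not_sq_sub_mul_sq_eq_of_derivative_eq_pow (hm : 2 * m + 1 = p) {f F A B : k[X]}
    (hf : f.natDegree = 3) {c e₁ e₂ : k} (he : e₁ ≠ e₂) (he₁ : f.IsRoot e₁) (he₂ : f.IsRoot e₂)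
    (hF : derivative F = f ^ m) (hc : c ≠ 0) (hAB : IsCoprime A B) :
    A ^ 2 - f * B ^ 2 ≠ C c * (X - C x) ^ p := by
  intro h
  have h2 : (2 : k) ≠ 0 := by
    exact_mod_cast CharP.cast_ne_zero_of_ne_of_prime k Nat.prime_two (p := p) (by lia)
  have hA0 : A.natDegree ≠ 0 := natDegree_ne_zero_of_sq_sub_mul_sq_eq h hc he he₁ he₂
  obtain ⟨hAm, hB, hBm⟩ := natDegree_le_of_natDegree_sq_sub_mul_sq_eq (A := A) (m := m) hf <| by
    rw [h, natDegree_C_mul hc, natDegree_pow, natDegree_X_sub_C, mul_one, hm]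
  obtain ⟨E, hE, hE2⟩ :=
    exists_derivative_eq_mul_of_sq_sub_eq h2 hAB hB (by simp [derivative_pow]) h
  have hE0 : E ≠ 0 := by
    rintro rfl
    refine hA0 (natDegree_eq_zero_of_derivative_eq_zero_of_lt (p := p) ?_ (by lia))
    rw [hE, mul_zero]
  obtain ⟨e, rfl⟩ : ∃ e, C e = E := natDegree_eq_zero.1 <| by
    have := natDegree_derivative_le A
    rw [hE, natDegree_mul hB hE0] at this
    lia
  have hA : A = 0 := by
    refine eq_zero_of_differential_equation hm (pow_ne_zero 2 (C_ne_zero.1 hE0))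
      (ne_zero_of_natDegree_gt (n := 2) (by lia)) hF ?_
    rw [hE, derivative_mul, derivative_C, C_pow]
    linear_combination C e * hE2
  exact hA0 (hA ▸ natDegree_zero)

theorem nsmul_ne_zero_of_derivative_eq_weierstrassCubic_pow [DecidableEq k] [W.IsCharNeTwoNF]
    (hm : 2 * m + 1 = p) (h : W.Nonsingular x y) {e₁ e₂ : k} (he : e₁ ≠ e₂)
    (he₁ : (weierstrassCubic W).IsRoot e₁) (he₂ : (weierstrassCubic W).IsRoot e₂) {F : k[X]}
    (hF : derivative F = weierstrassCubic W ^ m) : p • Affine.Point.some x y h ≠ 0 := by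
  intro hP
  by_cases hy : y = W.negY x y
  · have h2P : 2 • Affine.Point.some x y h = 0 := by
      rw [two_nsmul, add_eq_zero_iff_eq_neg, Affine.Point.neg_some]
      exact (Affine.Point.some.injEq ..).mpr ⟨rfl, hy⟩
    rw [← hm, add_nsmul, mul_nsmul, h2P, nsmul_zero, zero_add, one_nsmul] at hP
    exact Affine.Point.some_ne_zero h hP
  · obtain ⟨A, B, c, hc, hAB, hN⟩ := exists_isCoprime_sq_sub_eq_of_nsmul_eq_zero h hy hP
    exact not_sq_sub_mul_sq_eq_of_derivative_eq_pow hm (natDegree_weierstrassCubic W) he he₁ he₂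
      hF hc hAB hN

end SupersingularTorsion

section DeuringPolynomial

section CommRing

variable (R : Type*) [CommRing R]

/-- Deuring's polynomial `H_m(λ) = ∑ i, (m choose i)² λ^i`, whose roots in characteristic
`p = 2m + 1` are the `λ` for which the Legendre curve `y² = x(x - 1)(x - λ)` is supersingular. -/
noncomputable def deuringPolynomial (m : ℕ) : R[X] :=
  ∑ i ∈ Finset.range (m + 1), C ((m.choose i : R) ^ 2) * X ^ i

theorem coeff_deuringPolynomial (m i : ℕ) :
    (deuringPolynomial R m).coeff i = (m.choose i : R) ^ 2 := by
  simp only [deuringPolynomial, finsetSum_coeff, coeff_C_mul_X_pow, Finset.sum_ite_eq,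
    Finset.mem_range]
  split_ifs with h
  · rfl
  · rw [Nat.choose_eq_zero_of_lt (by lia), Nat.cast_zero, zero_pow two_ne_zero]

theorem natDegree_deuringPolynomial [Nontrivial R] (m : ℕ) :
    (deuringPolynomial R m).natDegree = m := by
  refine natDegree_eq_of_le_of_coeff_ne_zero (natDegree_le_iff_coeff_eq_zero.2 fun i hi ↦ ?_) ?_
  · rw [coeff_deuringPolynomial, Nat.choose_eq_zero_of_lt hi, Nat.cast_zero, zero_pow two_ne_zero]
  · rw [coeff_deuringPolynomial, Nat.choose_self, Nat.cast_one, one_pow]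
    exact one_ne_zero

theorem eval_zero_deuringPolynomial (m : ℕ) : (deuringPolynomial R m).eval 0 = 1 := by
  rw [← coeff_zero_eq_eval_zero, coeff_deuringPolynomial, Nat.choose_zero_right, Nat.cast_one,
    one_pow]

theorem eval_one_deuringPolynomial (m : ℕ) :
    (deuringPolynomial R m).eval 1 = ((2 * m).choose m : R) := by
  rw [← Nat.sum_range_choose_sq m, deuringPolynomial, eval_finsetSum]
  simp

theorem iterate_derivative_deuringPolynomial (m : ℕ) :
    derivative^[m] (deuringPolynomial R m) = C (m.factorial : R) := by
  ext i
  rw [coeff_iterate_derivative, coeff_deuringPolynomial, coeff_C]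
  split_ifs with hi
  · simp [hi, Nat.descFactorial_self]
  · simp [Nat.choose_eq_zero_of_lt (show m < i + m by lia)]

variable {R} {m : ℕ}

theorem sq_mul_choose_succ_sq (m i : ℕ) : ((i : R) + 1) ^ 2 * (m.choose (i + 1) : R) ^ 2 =
    ((m : R) - i) ^ 2 * (m.choose i : R) ^ 2 := by
  obtain h | h := le_or_gt i m
  · have := congr(($(Nat.choose_succ_right_eq m i) : R))
    push_cast [Nat.cast_sub h] at this
    linear_combination
      ((i + 1 : R) * (m.choose (i + 1) : R) + (m - i : R) * m.choose i) * this
  · simp [Nat.choose_eq_zero_of_lt h, Nat.choose_eq_zero_of_lt (h.trans i.lt_succ_self)]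

theorem differential_equation_deuringPolynomial (hm : 2 * (m : R) + 1 = 0) :
    4 * X * (1 - X) * derivative (derivative (deuringPolynomial R m)) +
      4 * (1 - 2 * X) * derivative (deuringPolynomial R m) = deuringPolynomial R m := by
  have hcoeff (i : ℕ) := sq_mul_choose_succ_sq (R := R) m i
  set H := deuringPolynomial R m with hH
  suffices C 4 * (X * derivative (derivative H)) - C 4 * (X * (X * derivative (derivative H))) +
      C 4 * derivative H - C 8 * (X * derivative H) = H by
    simp only [C_ofNat] at this
    linear_combination this
  ext i
  specialize hcoeff i
  obtain _ | _ | i := i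
  all_goals
    simp only [coeff_add, coeff_sub, coeff_C_mul, coeff_X_mul, coeff_X_mul_zero, mul_zero,
      coeff_derivative, hH, coeff_deuringPolynomial]
    push_cast at hcoeff ⊢
  · linear_combination 4 * hcoeff + (2 * (m : R) - 1) * (m.choose 0 : R) ^ 2 * hm
  · linear_combination 4 * hcoeff + (2 * (m : R) - 5) * (m.choose (0 + 1) : R) ^ 2 * hm
  · linear_combination
      4 * hcoeff + (2 * (m : R) - 4 * (i + 1 + 1) - 1) * (m.choose (i + 1 + 1) : R) ^ 2 * hm

theorem iterated_differential_equation_deuringPolynomial (hm : 2 * (m : R) + 1 = 0) (j : ℕ) :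
    4 * X * (1 - X) * derivative^[j + 2] (deuringPolynomial R m) +
      4 * ((j : R[X]) + 1) * (1 - 2 * X) * derivative^[j + 1] (deuringPolynomial R m) =
      (2 * (j : R[X]) + 1) ^ 2 * derivative^[j] (deuringPolynomial R m) := by
  induction j with
  | zero => simpa using differential_equation_deuringPolynomial hm
  | succ j ih =>
    have := congr(derivative $ih)
    simp only [derivative_sub, derivative_add, derivative_mul, derivative_X, derivative_one,
      derivative_pow, derivative_natCast, derivative_ofNat,
      ← Function.iterate_succ_apply' derivative, Nat.succ_eq_add_one, add_assoc, Nat.reduceAdd]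
      at this ⊢
    push_cast
    linear_combination this

end CommRing

section Field

variable {k : Type*} [Field k] {p m : ℕ} [Fact p.Prime] [CharP k p]

theorem eval_one_deuringPolynomial_ne_zero (hm : 2 * m + 1 = p) :
    (deuringPolynomial k m).eval 1 ≠ 0 := by
  rw [eval_one_deuringPolynomial, Ne, CharP.cast_eq_zero_iff k p]
  intro h
  have hdvd : p ∣ (2 * m).factorial := h.trans
    ⟨_, by rw [← mul_assoc, Nat.choose_mul_factorial_mul_factorial (by lia : m ≤ 2 * m)]⟩
  exact absurd ((Fact.out : p.Prime).dvd_factorial.1 hdvd) (by lia)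

theorem derivative_deuringPolynomial_eval_ne_zero (hm : 2 * m + 1 = p) {l : k}
    (hl : (deuringPolynomial k m).eval l = 0) :
    (derivative (deuringPolynomial k m)).eval l ≠ 0 := by
  intro hl'
  have hl0 : l ≠ 0 := by
    rintro rfl
    exact one_ne_zero ((eval_zero_deuringPolynomial k m).symm.trans hl)
  have hl1 : 1 - l ≠ 0 := by
    rw [sub_ne_zero]
    rintro rfl
    exact eval_one_deuringPolynomial_ne_zero hm hl
  have h2 : (2 : k) ≠ 0 := by
    exact_mod_cast CharP.cast_ne_zero_of_ne_of_prime k Nat.prime_two (p := p) (by lia)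
  have h4 : (4 : k) ≠ 0 := by
    rw [show (4 : k) = 2 * 2 by norm_num]
    exact mul_ne_zero h2 h2
  have hmk : 2 * (m : k) + 1 = 0 := by
    rw [← CharP.cast_eq_zero k p, ← hm]
    push_cast
    rfl
  have hvanish (j : ℕ) : (derivative^[j] (deuringPolynomial k m)).eval l = 0 ∧
      (derivative^[j + 1] (deuringPolynomial k m)).eval l = 0 := by
    induction j with
    | zero => exact ⟨hl, hl'⟩
    | succ j ih =>
      have := congr(eval l $(iterated_differential_equation_deuringPolynomial hmk j))
      simp only [eval_add, eval_mul, ih, mul_zero, add_zero, eval_sub, eval_X, eval_one,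
        eval_ofNat] at this
      exact ⟨ih.2, (mul_eq_zero.1 this).resolve_left (mul_ne_zero (mul_ne_zero h4 hl0) hl1)⟩
  have hfact := (hvanish m).1
  rw [iterate_derivative_deuringPolynomial, eval_C, CharP.cast_eq_zero_iff k p,
    (Fact.out : p.Prime).dvd_factorial] at hfact
  lia

theorem deuringPolynomial_ne_zero (m : ℕ) : deuringPolynomial k m ≠ 0 := fun h ↦ by
  simpa [h] using eval_zero_deuringPolynomial k m

theorem nodup_roots_deuringPolynomial (hm : 2 * m + 1 = p) :
    (deuringPolynomial k m).roots.Nodup := by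
  classical
  rw [Multiset.nodup_iff_count_le_one]
  intro l
  rw [count_roots]
  by_contra! h
  rw [one_lt_rootMultiplicity_iff_isRoot (deuringPolynomial_ne_zero m)] at h
  exact derivative_deuringPolynomial_eval_ne_zero hm h.1 h.2

theorem card_roots_deuringPolynomial [IsAlgClosed k] (m : ℕ) :
    (deuringPolynomial k m).roots.card = m := by
  rw [← (IsAlgClosed.splits _).natDegree_eq_card_roots, natDegree_deuringPolynomial]

end Field

end DeuringPolynomial

section Antiderivative

variable {k : Type*} [Field k]

theorem exists_derivative_eq_of_coeff_eq_zero {q : k[X]}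
    (hq : ∀ n : ℕ, (n + 1 : k) = 0 → q.coeff n = 0) : ∃ F, derivative F = q := by
  refine ⟨∑ n ∈ q.support, C (q.coeff n / (n + 1)) * X ^ (n + 1), ?_⟩
  conv_rhs => rw [q.as_sum_support_C_mul_X_pow]
  rw [derivative_sum]
  refine Finset.sum_congr rfl fun n hn ↦ ?_
  rw [derivative_C_mul_X_pow, Nat.cast_add_one,
    div_mul_cancel₀ _ (mt (hq n) (mem_support_iff.1 hn)), Nat.add_sub_cancel]

theorem coeff_legendre_cubic_pow (m : ℕ) (d l : k) :
    ((X * (X - C d) * (X - C (d * l))) ^ m).coeff (2 * m) =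
      (-d) ^ m * (deuringPolynomial k m).eval l := by
  rw [mul_pow, mul_pow, mul_assoc, two_mul, coeff_X_pow_mul, coeff_mul,
    Finset.Nat.sum_antidiagonal_eq_sum_range_succ_mk, deuringPolynomial, eval_finsetSum,
    Finset.mul_sum]
  refine Finset.sum_congr rfl fun i hi ↦ ?_
  have him : i ≤ m := Nat.lt_succ_iff.1 (Finset.mem_range.1 hi)
  simp only [sub_eq_add_neg, ← C_neg, coeff_X_add_C_pow, eval_mul, eval_C, eval_pow, eval_X]
  rw [Nat.choose_symm him, Nat.sub_sub_self him, neg_mul_eq_neg_mul, mul_pow,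
    ← Nat.sub_add_cancel him, pow_add, Nat.sub_add_cancel him]
  ring

variable {p m : ℕ} [CharP k p]

theorem exists_derivative_eq_cubic_pow (hm : 2 * m + 1 = p) (a d : k) {l : k}
    (hl : (deuringPolynomial k m).eval l = 0) :
    ∃ F, derivative F = ((X - C a) * (X - C (a + d)) * (X - C (a + d * l))) ^ m := by
  set q : k[X] := (X * (X - C d) * (X - C (d * l))) ^ m with hq
  have hdeg : q.natDegree ≤ m * 3 := natDegree_pow_le_of_le m (by compute_degree)
  obtain ⟨G, hG⟩ := exists_derivative_eq_of_coeff_eq_zero (q := q) fun n hn ↦ by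
    by_cases hn3 : n ≤ m * 3
    · obtain ⟨r, hr⟩ : p ∣ n + 1 := (CharP.cast_eq_zero_iff k p _).1 (mod_cast hn)
      have hr1 : r = 1 := by nlinarith
      rw [show n = 2 * m by lia, hq, coeff_legendre_cubic_pow, hl, mul_zero]
    · exact coeff_eq_zero_of_natDegree_lt (by lia)
  refine ⟨G.comp (X - C a), ?_⟩
  rw [derivative_comp, hG]
  simp [hq, sub_sub]

end Antiderivative

section DegreeBound

variable {R : Type*} [CommRing R]

theorem natDegree_preNormEDS'_even_le (b c d : R[X]) (m : ℕ) :
    (preNormEDS' b c d (2 * (m + 3))).natDegree ≤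
      max (2 * (preNormEDS' b c d (m + 2)).natDegree + (preNormEDS' b c d (m + 3)).natDegree +
          (preNormEDS' b c d (m + 5)).natDegree)
        ((preNormEDS' b c d (m + 1)).natDegree + (preNormEDS' b c d (m + 3)).natDegree +
          2 * (preNormEDS' b c d (m + 4)).natDegree) := by
  rw [preNormEDS'_even]
  refine natDegree_sub_le_of_le (natDegree_mul_le_of_le (natDegree_mul_le_of_le ?_ le_rfl) le_rfl)
    (natDegree_mul_le_of_le (natDegree_mul_le_of_le le_rfl le_rfl) ?_) <;>
  exact natDegree_pow_le

theorem natDegree_preNormEDS'_odd_le {b : R[X]} (hb : b.natDegree ≤ 6) (c d : R[X]) (m : ℕ) :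
    (preNormEDS' b c d (2 * (m + 2) + 1)).natDegree ≤
      max ((preNormEDS' b c d (m + 4)).natDegree + 3 * (preNormEDS' b c d (m + 2)).natDegree +
          if Even m then 6 else 0)
        ((preNormEDS' b c d (m + 1)).natDegree + 3 * (preNormEDS' b c d (m + 3)).natDegree +
          if Even m then 0 else 6) := by
  rw [preNormEDS'_odd]
  refine natDegree_sub_le_of_le
    (natDegree_mul_le_of_le (natDegree_mul_le_of_le le_rfl natDegree_pow_le) ?_)
    (natDegree_mul_le_of_le (natDegree_mul_le_of_le le_rfl natDegree_pow_le) ?_) <;>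
  split_ifs <;> simp [hb]

theorem two_mul_natDegree_preNormEDS'_add_le {b c d : R[X]} (hb : b.natDegree ≤ 6)
    (hc : c.natDegree ≤ 4) (hd : d.natDegree ≤ 6) {n : ℕ} (hn : n ≠ 0) :
    2 * (preNormEDS' b c d n).natDegree + (if Even n then 4 else 1) ≤ n ^ 2 := by
  induction n using normEDSRec with
  | zero => exact absurd rfl hn
  | one => simp
  | two => simp
  | three =>
    rw [preNormEDS'_three, if_neg (by decide)]
    lia
  | four =>
    rw [preNormEDS'_four, if_pos (by decide)]
    lia
  | even m h₁ h₂ h₃ h₄ h₅ =>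
    specialize h₁ (by lia)
    specialize h₂ (by lia)
    specialize h₃ (by lia)
    specialize h₄ (by lia)
    specialize h₅ (by lia)
    rw [if_pos (even_two_mul _)]
    obtain hm | hm := em (Even m) <;>
    obtain hdeg | hdeg := le_max_iff.1 (natDegree_preNormEDS'_even_le b c d m) <;>
    · simp +decide only [Nat.even_add, hm, iff_true, iff_false, if_true, if_false]
        at h₁ h₂ h₃ h₄ h₅
      linarith
  | odd m h₁ h₂ h₃ h₄ =>
    specialize h₁ (by lia)
    specialize h₂ (by lia)
    specialize h₃ (by lia)
    specialize h₄ (by lia)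
    rw [if_neg (Nat.not_even_two_mul_add_one _)]
    obtain hm | hm := em (Even m) <;>
    obtain hdeg | hdeg := le_max_iff.1 (natDegree_preNormEDS'_odd_le hb c d m) <;>
    · simp +decide only [Nat.even_add, hm, iff_true, iff_false, if_true, if_false]
        at h₁ h₂ h₃ h₄ hdeg
      linarith

/-- The homomorphism `P(l, x) ↦ P(u, vu)`, with `l` and `v` the inner variables and `x` and `u` the
outer ones. It turns the total degree of `P` into the degree in the outer variable. -/
noncomputable def homogenizeVariable (R : Type*) [CommRing R] : R[X][X] →+* R[X][X] :=
  eval₂RingHom (mapRingHom C) (C X * X)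

theorem coeff_coeff_homogenizeVariable (P : R[X][X]) (i j : ℕ) :
    ((homogenizeVariable R P).coeff (i + j)).coeff j = (P.coeff j).coeff i := by
  induction P using Polynomial.induction_on' with
  | add P Q hP hQ => simp only [map_add, coeff_add, hP, hQ]
  | monomial n a =>
    rw [homogenizeVariable, coe_eval₂RingHom, eval₂_monomial, coe_mapRingHom, mul_pow, ← C_pow,
      coeff_monomial, mul_comm (C _), ← mul_assoc, coeff_mul_C, coeff_mul_X_pow', coeff_mul_X_pow']
    obtain h | rfl | h := lt_trichotomy n j
    · rw [if_neg h.ne, if_pos h.le, if_pos (by lia), coeff_map, coeff_C, if_neg (by lia),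
        coeff_zero]
    · rw [if_pos rfl, if_pos le_rfl, if_pos (by lia), coeff_map, coeff_C, if_pos (Nat.sub_self n),
        Nat.add_sub_cancel]
    · rw [if_neg h.ne', if_neg (by lia), coeff_zero]

theorem natDegree_coeff_le_natDegree_homogenizeVariable_sub (P : R[X][X]) (j : ℕ) :
    (P.coeff j).natDegree ≤ (homogenizeVariable R P).natDegree - j := by
  refine natDegree_le_iff_coeff_eq_zero.2 fun i hi ↦ ?_
  have hij : (homogenizeVariable R P).natDegree < i + j := by omega
  rw [← coeff_coeff_homogenizeVariable, coeff_eq_zero_of_natDegree_lt hij, coeff_zero]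

theorem natDegree_homogenizeVariable_C_mul_X_pow_le {a : R[X]} {n N : ℕ}
    (h : a.natDegree + n ≤ N) : (homogenizeVariable R (C a * X ^ n)).natDegree ≤ N := by
  rw [map_mul, map_pow, homogenizeVariable, coe_eval₂RingHom, eval₂_C, eval₂_X, mul_pow, ← C_pow,
    mul_left_comm]
  exact ((natDegree_C_mul_le _ _).trans
    (natDegree_mul_le_of_le natDegree_map_le (natDegree_X_pow_le n))).trans h

variable {W : WeierstrassCurve R[X]}

theorem natDegree_homogenizeVariable_Ψ₂Sq_le (h₂ : W.b₂.natDegree ≤ 1) (h₄ : W.b₄.natDegree ≤ 2)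
    (h₆ : W.b₆.natDegree ≤ 3) : (homogenizeVariable R W.Ψ₂Sq).natDegree ≤ 3 := by
  have hΨ : W.Ψ₂Sq = C 4 * X ^ 3 + C W.b₂ * X ^ 2 + C (2 * W.b₄) * X ^ 1 + C W.b₆ * X ^ 0 := by
    simp [Ψ₂Sq]
  simp only [hΨ, map_add]
  have h₄' : (2 * W.b₄).natDegree ≤ 2 := by compute_degree!
  have h₀ : (4 : R[X]).natDegree ≤ 0 := by compute_degree!
  refine natDegree_add_le_of_degree_le (natDegree_add_le_of_degree_le
    (natDegree_add_le_of_degree_le ?_ ?_) ?_) ?_ <;>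
  exact natDegree_homogenizeVariable_C_mul_X_pow_le (by lia)

theorem natDegree_homogenizeVariable_Ψ₃_le (h₂ : W.b₂.natDegree ≤ 1) (h₄ : W.b₄.natDegree ≤ 2)
    (h₆ : W.b₆.natDegree ≤ 3) (h₈ : W.b₈.natDegree ≤ 4) :
    (homogenizeVariable R W.Ψ₃).natDegree ≤ 4 := by
  have hΨ : W.Ψ₃ = C 3 * X ^ 4 + C W.b₂ * X ^ 3 + C (3 * W.b₄) * X ^ 2 + C (3 * W.b₆) * X ^ 1 +
      C W.b₈ * X ^ 0 := by
    simp [Ψ₃, map_ofNat C]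
  simp only [hΨ, map_add]
  have h₀ : (3 : R[X]).natDegree ≤ 0 := by compute_degree!
  have h₄' : (3 * W.b₄).natDegree ≤ 2 := by compute_degree!
  have h₆' : (3 * W.b₆).natDegree ≤ 3 := by compute_degree!
  refine natDegree_add_le_of_degree_le (natDegree_add_le_of_degree_le
    (natDegree_add_le_of_degree_le (natDegree_add_le_of_degree_le ?_ ?_) ?_) ?_) ?_ <;>
  exact natDegree_homogenizeVariable_C_mul_X_pow_le (by lia)

theorem natDegree_homogenizeVariable_preΨ₄_le (h₂ : W.b₂.natDegree ≤ 1) (h₄ : W.b₄.natDegree ≤ 2)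
    (h₆ : W.b₆.natDegree ≤ 3) (h₈ : W.b₈.natDegree ≤ 4) :
    (homogenizeVariable R W.preΨ₄).natDegree ≤ 6 := by
  have hΨ : W.preΨ₄ = C 2 * X ^ 6 + C W.b₂ * X ^ 5 + C (5 * W.b₄) * X ^ 4 +
      C (10 * W.b₆) * X ^ 3 + C (10 * W.b₈) * X ^ 2 + C (W.b₂ * W.b₈ - W.b₄ * W.b₆) * X ^ 1 +
      C (W.b₄ * W.b₈ - W.b₆ ^ 2) * X ^ 0 := by
    simp [preΨ₄, map_ofNat C]
  simp only [hΨ, map_add]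
  have h₀ : (2 : R[X]).natDegree ≤ 0 := by compute_degree!
  have h₄' : (5 * W.b₄).natDegree ≤ 2 := by compute_degree!
  have h₆' : (10 * W.b₆).natDegree ≤ 3 := by compute_degree!
  have h₈' : (10 * W.b₈).natDegree ≤ 4 := by compute_degree!
  have h₁₀ : (W.b₂ * W.b₈ - W.b₄ * W.b₆).natDegree ≤ 5 := by compute_degree; lia
  have h₁₂ : (W.b₄ * W.b₈ - W.b₆ ^ 2).natDegree ≤ 6 := by compute_degree; lia
  refine natDegree_add_le_of_degree_le (natDegree_add_le_of_degree_le
    (natDegree_add_le_of_degree_le (natDegree_add_le_of_degree_le (natDegree_add_le_of_degree_le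
      (natDegree_add_le_of_degree_le ?_ ?_) ?_) ?_) ?_) ?_) ?_ <;>
  exact natDegree_homogenizeVariable_C_mul_X_pow_le (by lia)

theorem natDegree_coeff_preΨ_le (h₂ : W.b₂.natDegree ≤ 1) (h₄ : W.b₄.natDegree ≤ 2)
    (h₆ : W.b₆.natDegree ≤ 3) (h₈ : W.b₈.natDegree ≤ 4) (m : ℕ) :
    ((W.preΨ ((2 * m + 1 : ℕ) : ℤ)).coeff ((2 * m + 1) * m)).natDegree ≤ m := by
  have hdeg := two_mul_natDegree_preNormEDS'_add_le
    (natDegree_pow_le_of_le 2 (natDegree_homogenizeVariable_Ψ₂Sq_le h₂ h₄ h₆))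
    (natDegree_homogenizeVariable_Ψ₃_le h₂ h₄ h₆ h₈)
    (natDegree_homogenizeVariable_preΨ₄_le h₂ h₄ h₆ h₈) (Nat.succ_ne_zero (2 * m))
  rw [← map_pow, ← map_preNormEDS', if_neg (Nat.not_even_two_mul_add_one m)] at hdeg
  rw [preΨ_ofNat, preΨ']
  refine (natDegree_coeff_le_natDegree_homogenizeVariable_sub _ _).trans
    (Nat.sub_le_iff_le_add.2 ?_)
  linarith

theorem natDegree_coeff_preΨ_le_of_isShortNF [W.IsShortNF] (h₄ : W.a₄.natDegree ≤ 2)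
    (h₆ : W.a₆.natDegree ≤ 3) (m : ℕ) :
    ((W.preΨ ((2 * m + 1 : ℕ) : ℤ)).coeff ((2 * m + 1) * m)).natDegree ≤ m := by
  apply natDegree_coeff_preΨ_le
  · simp
  · rw [b₄_of_isShortNF]
    compute_degree!
  · rw [b₆_of_isShortNF]
    compute_degree!
  · rw [b₈_of_isShortNF]
    compute_degree
    lia

end DegreeBound

section LegendreFamily

/-- The curve `y² = (x + e(1 + l))(x - e(2 - l))(x - e(2l - 1))`: the Legendre curve
`y² = x(x - d)(x - dl)` with `d = 3e`, translated so that its equation has no `x²` term. -/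
def centeredLegendreCurve {R : Type*} [CommRing R] (e l : R) : WeierstrassCurve R :=
  { a₁ := 0, a₂ := 0, a₃ := 0, a₄ := -3 * e ^ 2 * (l ^ 2 - l + 1)
    a₆ := e ^ 3 * (1 + l) * (2 - l) * (2 * l - 1) }

instance {R : Type*} [CommRing R] (e l : R) : (centeredLegendreCurve e l).IsShortNF :=
  ⟨rfl, rfl, rfl⟩

theorem map_centeredLegendreCurve {R S : Type*} [CommRing R] [CommRing S] (f : R →+* S) (e l : R) :
    (centeredLegendreCurve e l).map f = centeredLegendreCurve (f e) (f l) := by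
  simp [centeredLegendreCurve, WeierstrassCurve.map, map_ofNat f]

theorem Δ_centeredLegendreCurve {R : Type*} [CommRing R] (e l : R) :
    (centeredLegendreCurve e l).Δ = 2 ^ 4 * 3 ^ 6 * e ^ 6 * l ^ 2 * (1 - l) ^ 2 := by
  rw [Δ_of_isShortNF, centeredLegendreCurve]
  ring

section Field

variable {k : Type*} [Field k]

theorem weierstrassCubic_centeredLegendreCurve (e l : k) :
    weierstrassCubic (centeredLegendreCurve e l) =
      (X - C (-e * (1 + l))) * (X - C (-e * (1 + l) + 3 * e)) *
        (X - C (-e * (1 + l) + 3 * e * l)) := by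
  simp only [weierstrassCubic, centeredLegendreCurve, map_add, map_sub, map_mul, map_neg, map_pow,
    map_zero, map_one, map_ofNat]
  ring

theorem exists_eq_centeredLegendreCurve [IsAlgClosed k] (h3 : (3 : k) ≠ 0) (W : WeierstrassCurve k)
    [W.IsShortNF] (hΔ : W.Δ ≠ 0) : ∃ e l : k, e ≠ 0 ∧ W = centeredLegendreCurve e l := by
  obtain ⟨r, hr⟩ := IsAlgClosed.exists_root (C 1 * X ^ 3 + C 0 * X ^ 2 + C W.a₄ * X + C W.a₆)
    (by rw [degree_cubic one_ne_zero]; decide)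
  obtain ⟨r', hr'⟩ := IsAlgClosed.exists_root (C 1 * X ^ 2 + C r * X + C (r ^ 2 + W.a₄))
    (by rw [degree_quadratic one_ne_zero]; decide)
  have h₆ : W.a₆ = -(r ^ 3 + W.a₄ * r) := by
    simp only [IsRoot, eval_add, eval_mul, eval_pow, eval_X, eval_C] at hr
    linear_combination hr
  have h₄ : W.a₄ = -(r ^ 2 + r * r' + r' ^ 2) := by
    simp only [IsRoot, eval_add, eval_mul, eval_pow, eval_X, eval_C] at hr'
    linear_combination hr'
  have hne : r' - r ≠ 0 := by
    refine fun h ↦ hΔ ?_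
    rw [Δ_of_isShortNF, h₆, h₄, sub_eq_zero.1 h]
    ring
  refine ⟨(r' - r) / 3, -(r' + 2 * r) / (r' - r), div_ne_zero hne h3, ?_⟩
  ext
  · exact a₁_of_isShortNF W
  · exact a₂_of_isShortNF W
  · exact a₃_of_isShortNF W
  · rw [h₄, centeredLegendreCurve]
    field_simp
    ring
  · rw [h₆, h₄, centeredLegendreCurve]
    field_simp
    ring

end Field

section Supersingular

variable {k : Type*} [Field k] [IsAlgClosed k] {p m : ℕ} [Fact p.Prime] [CharP k p]

theorem degree_eq_zero_of_comp_X_pow_eq_preΨ (hm : 2 * m + 1 = p) {W : WeierstrassCurve k}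
    [W.IsCharNeTwoNF] (hΔ : W.Δ ≠ 0) {e₁ e₂ : k} (he : e₁ ≠ e₂)
    (he₁ : (weierstrassCubic W).IsRoot e₁) (he₂ : (weierstrassCubic W).IsRoot e₂) {F : k[X]}
    (hF : derivative F = weierstrassCubic W ^ m) {θ : k[X]} (hθ : θ.comp (X ^ p) = W.preΨ p) :
    θ.degree = 0 := by
  classical
  by_contra hdeg
  obtain ⟨r, hr⟩ := IsAlgClosed.exists_root θ hdeg
  obtain ⟨x, rfl⟩ := IsAlgClosed.exists_pow_nat_eq r (Fact.out : p.Prime).pos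
  obtain ⟨y, hy⟩ := IsAlgClosed.exists_pow_nat_eq ((weierstrassCubic W).eval x) two_pos
  have hW : W.toAffine.Nonsingular x y := by
    rw [← Affine.equation_iff_nonsingular_of_Δ_ne_zero hΔ, Affine.equation_iff,
      a₁_of_isCharNeTwoNF, a₃_of_isCharNeTwoNF, hy, weierstrassCubic]
    simp
  have hx : (W.preΨ p).eval x = 0 := by
    rwa [← hθ, eval_comp, eval_pow, eval_X]
  refine nsmul_ne_zero_of_derivative_eq_weierstrassCubic_pow hm hW he he₁ he₂ hF ?_
  rw [← natCast_zsmul]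
  exact zsmul_eq_zero_of_eval_preΨ_eq_zero hW (mod_cast (Fact.out : p.Prime).one_le) hx

theorem degree_eq_zero_of_comp_X_pow_eq_preΨ_centeredLegendreCurve (hm : 2 * m + 1 = p)
    (hp : p ≠ 3) {e l : k} (he : e ≠ 0) (hl : (deuringPolynomial k m).IsRoot l) {θ : k[X]}
    (hθ : θ.comp (X ^ p) = (centeredLegendreCurve e l).preΨ p) : θ.degree = 0 := by
  have h2 : (2 : k) ≠ 0 := by
    exact_mod_cast CharP.cast_ne_zero_of_ne_of_prime k Nat.prime_two (p := p) (by lia)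
  have h3 : (3 : k) ≠ 0 := by
    exact_mod_cast CharP.cast_ne_zero_of_ne_of_prime k Nat.prime_three (p := p) hp
  have hl₀ : l ≠ 0 := by
    rintro rfl
    rw [IsRoot, eval_zero_deuringPolynomial] at hl
    exact one_ne_zero hl
  have hl₁ : 1 - l ≠ 0 := by
    refine fun h ↦ eval_one_deuringPolynomial_ne_zero (k := k) hm ?_
    rwa [sub_eq_zero.1 h]
  have hcubic := weierstrassCubic_centeredLegendreCurve e l
  obtain ⟨F, hF⟩ := exists_derivative_eq_cubic_pow hm (-e * (1 + l)) (3 * e) hl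
  rw [← hcubic] at hF
  have hΔ : (centeredLegendreCurve e l).Δ ≠ 0 := by
    rw [Δ_centeredLegendreCurve]
    positivity
  refine degree_eq_zero_of_comp_X_pow_eq_preΨ hm hΔ (e₁ := -e * (1 + l))
    (e₂ := -e * (1 + l) + 3 * e) ?_ ?_ ?_ hF hθ
  · simpa using ⟨h3, he⟩
  · simp [hcubic]
  · simp [hcubic]

end Supersingular

theorem not_X_sub_C_sq_dvd_of_roots {k : Type*} [Field k] {f : k[X]} (hf : f ≠ 0) {s : Multiset k}
    (hs : s.Nodup) (hroot : ∀ l ∈ s, f.IsRoot l) (hdeg : f.natDegree ≤ s.card) (l : k) :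
    ¬ (X - C l) ^ 2 ∣ f := by
  classical
  have hle : s ≤ f.roots := (Multiset.le_iff_subset hs).2 fun l hl ↦ (mem_roots hf).2 (hroot l hl)
  have hroots : s = f.roots := Multiset.eq_of_le_of_card_le hle (f.card_roots'.trans hdeg)
  rw [← le_rootMultiplicity_iff hf, ← count_roots, ← hroots, not_le]
  exact (Multiset.nodup_iff_count_le_one.1 hs l).trans_lt one_lt_two

section Family

variable {k : Type*} [Field k] [IsAlgClosed k] {p m : ℕ} [Fact p.Prime] [CharP k p]
  {e : k} {θ : k[X][X]}

omit [IsAlgClosed k] [CharP k p] in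
theorem natDegree_coeff_le_of_comp_X_pow_eq_preΨ (hm : 2 * m + 1 = p)
    (hθ : θ.comp (X ^ p) = (centeredLegendreCurve (C e) X).preΨ p) :
    (θ.coeff m).natDegree ≤ m := by
  have hcoeff : θ.coeff m = ((centeredLegendreCurve (C e) X).preΨ p).coeff (p * m) := by
    rw [← hθ, ← expand_eq_comp_X_pow, mul_comm p m, coeff_expand_mul (Fact.out : p.Prime).pos]
  rw [hcoeff, ← hm]
  refine natDegree_coeff_preΨ_le_of_isShortNF ?_ ?_ m
  · have h₄ : (centeredLegendreCurve (C e) X).a₄ = C (-3 * e ^ 2) * (X ^ 2 - X + 1) := by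
      simp [centeredLegendreCurve, map_ofNat C]
    rw [h₄]
    exact (natDegree_C_mul_le _ _).trans (by compute_degree)
  · have h₆ : (centeredLegendreCurve (C e) X).a₆ =
        C (e ^ 3) * ((1 + X) * (2 - X) * (2 * X - 1)) := by
      simp [centeredLegendreCurve, mul_assoc]
    rw [h₆]
    exact (natDegree_C_mul_le _ _).trans (by compute_degree)

theorem degree_map_evalRingHom_eq_zero (hm : 2 * m + 1 = p) (hp : p ≠ 3) (he : e ≠ 0) {l : k}
    (hl : (deuringPolynomial k m).IsRoot l)
    (hθ : θ.comp (X ^ p) = (centeredLegendreCurve (C e) X).preΨ p) :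
    (θ.map (evalRingHom l)).degree = 0 := by
  refine degree_eq_zero_of_comp_X_pow_eq_preΨ_centeredLegendreCurve hm hp he hl ?_
  have h := congrArg (Polynomial.map (evalRingHom l)) hθ
  rwa [map_comp, Polynomial.map_pow, map_X, ← map_preΨ, map_centeredLegendreCurve,
    coe_evalRingHom, eval_C, eval_X] at h

theorem X_sub_C_dvd_coeff_iff (hm : 2 * m + 1 = p) (hp : p ≠ 3) (he : e ≠ 0) {l : k}
    (hl : (deuringPolynomial k m).IsRoot l)
    (hθ : θ.comp (X ^ p) = (centeredLegendreCurve (C e) X).preΨ p) {j : ℕ} :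
    X - C l ∣ θ.coeff j ↔ j ≠ 0 := by
  have hdeg := degree_map_evalRingHom_eq_zero hm hp he hl hθ
  rw [dvd_iff_isRoot, IsRoot, ← coe_evalRingHom, ← coeff_map]
  constructor
  · rintro h rfl
    rw [eq_C_of_degree_eq_zero hdeg, h, C_0, degree_zero] at hdeg
    exact WithBot.bot_ne_zero hdeg
  · intro hj
    rw [eq_C_of_degree_eq_zero hdeg, coeff_C_of_ne_zero hj]

theorem not_X_sub_C_sq_dvd_coeff (hm : 2 * m + 1 = p) (hp : p ≠ 3) (he : e ≠ 0)
    (hθ : θ.comp (X ^ p) = (centeredLegendreCurve (C e) X).preΨ p) (h : θ.coeff m ≠ 0) (l : k) :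
    ¬ (X - C l) ^ 2 ∣ θ.coeff m := by
  refine not_X_sub_C_sq_dvd_of_roots h (nodup_roots_deuringPolynomial hm) (fun l' hl' ↦ ?_) ?_ l
  · have hm₀ : m ≠ 0 := by
      rintro rfl
      exact (Fact.out : p.Prime).one_lt.ne hm
    exact dvd_iff_isRoot.1 ((X_sub_C_dvd_coeff_iff hm hp he (isRoot_of_mem_roots hl') hθ).2 hm₀)
  · rw [card_roots_deuringPolynomial]
    exact natDegree_coeff_le_of_comp_X_pow_eq_preΨ hm hθ

end Family

end LegendreFamily

section ReversedEisenstein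

variable {R : Type*} [CommRing R]

theorem irreducible_mirror_iff [NoZeroDivisors R] {f : R[X]} :
    Irreducible f.mirror ↔ Irreducible f :=
  MulEquiv.irreducible_iff
    (MulEquiv.mk mirror_involutive.toPerm fun f g : R[X] ↦ mirror_mul_of_domain f g)

theorem isPrimitive_mirror [NoZeroDivisors R] {f : R[X]} (hf : f.IsPrimitive) :
    f.mirror.IsPrimitive := by
  rintro r ⟨g, hg⟩
  refine hf r ⟨g.mirror, ?_⟩
  rw [← mirror_C r, ← mirror_mul_of_domain, ← hg, mirror_mirror]

theorem irreducible_of_reversed_eisenstein [IsDomain R] {P : Ideal R} (hP : P.IsPrime) {f : R[X]}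
    (hf : f.IsPrimitive) (hdeg : f.natDegree ≠ 0) (h₀ : f.coeff 0 ∉ P)
    (hmem : ∀ j ≠ 0, f.coeff j ∈ P) (hlead : f.leadingCoeff ∉ P ^ 2) : Irreducible f := by
  have htrail : f.natTrailingDegree = 0 :=
    natTrailingDegree_eq_zero.2 (Or.inr fun h ↦ h₀ (h ▸ P.zero_mem))
  have hpos : 0 < f.mirror.degree := by
    rwa [← natDegree_pos_iff_degree_pos, mirror_natDegree, Nat.pos_iff_ne_zero]
  have hcoeff {n : ℕ} (hn : n ≤ f.natDegree) : f.mirror.coeff n = f.coeff (f.natDegree - n) := by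
    rw [coeff_mirror, htrail, add_zero, revAt_le hn]
  refine irreducible_mirror_iff.1 (irreducible_of_eisenstein_criterion hP ?_ (fun n hn ↦ ?_) hpos
    ?_ (isPrimitive_mirror hf))
  · rwa [mirror_leadingCoeff, trailingCoeff, htrail]
  · have hn' : n < f.natDegree := by rwa [← mirror_natDegree, ← coe_lt_degree]
    rw [hcoeff hn'.le]
    exact hmem _ (Nat.sub_ne_zero_of_lt hn')
  · rwa [hcoeff (Nat.zero_le _)]

theorem irreducible_map_fraction_map_of_reversed_eisenstein [IsDomain R]
    [UniqueFactorizationMonoid R] (F : Type*) [Field F] [Algebra R F] [IsFractionRing R F]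
    {P : Ideal R} (hP : P.IsPrime) {f : R[X]} (hdeg : f.natDegree ≠ 0) (h₀ : f.coeff 0 ∉ P)
    (hmem : ∀ j ≠ 0, f.coeff j ∈ P) (hlead : f.leadingCoeff ∉ P ^ 2) :
    Irreducible (f.map (algebraMap R F)) := by
  let _ : NormalizedGCDMonoid R := Nonempty.some inferInstance
  have hf : f = C f.content * f.primPart := f.eq_C_content_mul_primPart
  have hcoeff (j : ℕ) : f.coeff j = f.content * f.primPart.coeff j := by
    rw [← coeff_C_mul, ← hf]
  rw [hcoeff] at h₀
  have hcontent : f.content ∉ P := fun h ↦ h₀ (P.mul_mem_right _ h)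
  have hprim : Irreducible f.primPart := by
    refine irreducible_of_reversed_eisenstein hP f.isPrimitive_primPart
      (by rwa [natDegree_primPart]) (fun h ↦ h₀ (P.mul_mem_left _ h)) (fun j hj ↦ ?_) fun h ↦ ?_
    · exact (hP.mem_or_mem (hcoeff j ▸ hmem j hj)).resolve_left hcontent
    · refine hlead ?_
      rw [leadingCoeff, hcoeff, ← natDegree_primPart]
      exact Ideal.mul_mem_left _ _ h
  have hunit : IsUnit (C (algebraMap R F f.content)) := by
    rw [isUnit_C, isUnit_iff_ne_zero, Ne, FaithfulSMul.algebraMap_eq_zero_iff]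
    exact fun h ↦ hcontent (h ▸ P.zero_mem)
  rw [hf, Polynomial.map_mul, map_C, irreducible_isUnit_mul hunit]
  exact f.isPrimitive_primPart.irreducible_iff_irreducible_map_fraction_map.1 hprim

end ReversedEisenstein

section GenericCurve

theorem map_Wst {R S : Type*} [CommRing R] [CommRing S] (f : R →+* S) :
    (Wst R).map (MvPolynomial.map f) = Wst S := by
  simp [Wst, WeierstrassCurve.map]

instance {R : Type*} [CommRing R] : (Wst R).IsShortNF :=
  ⟨rfl, rfl, rfl⟩

instance {R S : Type*} [CommRing R] [CommRing S] (f : MvPolynomial (Fin 2) R →+* S) :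
    ((Wst R).map f).IsShortNF :=
  ⟨map_zero f, map_zero f, map_zero f⟩

variable {K : Type*} [Field K]

theorem Δ_Wst_ne_zero (h2 : (2 : K) ≠ 0) : (Wst K).Δ ≠ 0 := by
  intro h
  have h' := congrArg (MvPolynomial.eval ![(1 : K), 0]) h
  rw [Δ_of_isShortNF] at h'
  have h64 : (2 : K) ^ 6 = 0 := by
    simp only [Wst, map_mul, map_neg, map_add, map_pow, map_ofNat, map_zero, MvPolynomial.eval_X,
      Matrix.cons_val_zero, Matrix.cons_val_one] at h'
    linear_combination -h'
  exact h2 ((pow_eq_zero_iff (by decide)).1 h64)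

theorem exists_map_Wst_eq_centeredLegendreCurve {k : Type*} [Field k] [IsAlgClosed k]
    (h2 : (2 : K) ≠ 0) (h3 : (3 : K) ≠ 0) {ι : MvPolynomial (Fin 2) K →+* k}
    (hι : Function.Injective ι) :
    ∃ (e : k) (φ : MvPolynomial (Fin 2) K →+* k[X]), e ≠ 0 ∧ Function.Injective φ ∧
      (Wst K).map φ = centeredLegendreCurve (C e) X := by
  have h3' : (3 : k) ≠ 0 := by
    have := (map_ne_zero (ι.comp MvPolynomial.C)).2 h3
    rwa [map_ofNat] at this
  have hΔ : ((Wst K).map ι).Δ ≠ 0 := by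
    rw [map_Δ]
    exact (map_ne_zero_iff ι hι).2 (Δ_Wst_ne_zero h2)
  obtain ⟨e, l, he, hW⟩ := exists_eq_centeredLegendreCurve h3' ((Wst K).map ι) hΔ
  let E := centeredLegendreCurve (C e) X
  let φ : MvPolynomial (Fin 2) K →+* k[X] :=
    MvPolynomial.eval₂Hom (C.comp (ι.comp MvPolynomial.C)) ![E.a₄, E.a₆]
  have hφ : (Wst K).map φ = E := by
    simp [Wst, WeierstrassCurve.map, φ, E, centeredLegendreCurve]
  have hEl : E.map (evalRingHom l) = (Wst K).map ι := by
    rw [map_centeredLegendreCurve, hW, coe_evalRingHom, eval_C, eval_X]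
  have hcomp : (evalRingHom l).comp φ = ι := by
    rw [← hφ, WeierstrassCurve.map_map] at hEl
    refine MvPolynomial.ringHom_ext (fun a ↦ by simp [φ]) (Fin.forall_fin_two.2 ⟨?_, ?_⟩)
    · exact congrArg WeierstrassCurve.a₄ hEl
    · exact congrArg WeierstrassCurve.a₆ hEl
  refine ⟨e, φ, he, Function.Injective.of_comp (f := evalRingHom l) ?_, hφ⟩
  rwa [← RingHom.coe_comp, hcomp]

theorem irreducible_map_of_comp_X_pow_eq_preΨ_Wst {p m : ℕ} [Fact p.Prime] [CharP K p]
    (hm : 2 * m + 1 = p) (hp : p ≠ 3) {θ : (MvPolynomial (Fin 2) K)[X]} (hdeg : θ.natDegree = m)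
    (hθ : θ.comp (X ^ p) = (Wst K).preΨ p) (F : Type*) [Field F]
    [Algebra (MvPolynomial (Fin 2) K) F] [IsFractionRing (MvPolynomial (Fin 2) K) F] :
    Irreducible (θ.map (algebraMap (MvPolynomial (Fin 2) K) F)) := by
  let k := AlgebraicClosure F
  let ι : MvPolynomial (Fin 2) K →+* k :=
    (algebraMap F k).comp (algebraMap (MvPolynomial (Fin 2) K) F)
  have hι : Function.Injective ι :=
    (algebraMap F k).injective.comp (IsFractionRing.injective _ F)
  have : CharP k p :=
    charP_of_injective_ringHom (f := ι.comp MvPolynomial.C) (RingHom.injective _) p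
  have h2 : (2 : K) ≠ 0 := by
    exact_mod_cast CharP.cast_ne_zero_of_ne_of_prime K Nat.prime_two (p := p) (by lia)
  have h3 : (3 : K) ≠ 0 := by
    exact_mod_cast CharP.cast_ne_zero_of_ne_of_prime K Nat.prime_three (p := p) hp
  have hm₀ : m ≠ 0 := by
    rintro rfl
    exact (Fact.out : p.Prime).one_lt.ne hm
  obtain ⟨e, φ, he, hφ, hE⟩ := exists_map_Wst_eq_centeredLegendreCurve h2 h3 hι
  obtain ⟨l, hl⟩ : ∃ l, l ∈ (deuringPolynomial k m).roots := by
    rw [← Multiset.card_pos_iff_exists_mem, card_roots_deuringPolynomial]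
    exact Nat.pos_of_ne_zero hm₀
  have hΘ : (θ.map φ).comp (X ^ p) = (centeredLegendreCurve (C e) X).preΨ p := by
    rw [← hE, map_preΨ, ← hθ, map_comp, Polynomial.map_pow, map_X]
  have hdvd {j : ℕ} : θ.coeff j ∈ (Ideal.span {X - C l}).comap φ ↔ j ≠ 0 := by
    rw [Ideal.mem_comap, Ideal.mem_span_singleton, ← coeff_map,
      X_sub_C_dvd_coeff_iff hm hp he (isRoot_of_mem_roots hl) hΘ]
  have hprime : (Ideal.span {X - C l}).IsPrime :=
    (Ideal.span_singleton_prime (X_sub_C_ne_zero l)).2 (prime_X_sub_C l)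
  refine irreducible_map_fraction_map_of_reversed_eisenstein F (hprime.comap φ) (hdeg ▸ hm₀)
    (fun h ↦ hdvd.1 h rfl) (fun _ ↦ hdvd.2) fun h ↦ ?_
  have hlead : (θ.map φ).coeff m ≠ 0 := by
    rw [coeff_map, map_ne_zero_iff φ hφ, ← hdeg, coeff_natDegree, leadingCoeff_ne_zero]
    rintro rfl
    exact hm₀ (hdeg.symm.trans natDegree_zero)
  refine not_X_sub_C_sq_dvd_coeff hm hp he hΘ hlead l ?_
  rw [coeff_map, ← Ideal.mem_span_singleton, ← Ideal.span_singleton_pow, ← hdeg]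
  exact Ideal.le_comap_pow φ 2 h

end GenericCurve

/-- The polynomial `θ_{s,t}(X)` of degree `(p-1)/2`, with `θ_{s,t}(x^p) = ψ_{p,s,t}(x) mod p`,
is irreducible over the rational function field `K(s,t)`. -/
theorem theta_irreducible (p : ℕ) (hp : p.Prime) (hp5 : 5 ≤ p)
    (K : Type*) [Field K] [CharP K p]
    (θ : Polynomial (MvPolynomial (Fin 2) (ZMod p)))
    (hdeg : θ.natDegree = (p - 1) / 2)
    (hθ : θ.comp (Polynomial.X ^ p) =
      ((Wst ℤ).preΨ (p : ℤ)).map (MvPolynomial.map (Int.castRingHom (ZMod p)))) :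
    Irreducible (θ.map
      ((algebraMap (MvPolynomial (Fin 2) K) (FractionRing (MvPolynomial (Fin 2) K))).comp
        (MvPolynomial.map (ZMod.castHom (dvd_refl p) K)))) := by
  have := Fact.mk hp
  have hm : 2 * ((p - 1) / 2) + 1 = p := by
    have := hp.odd_of_ne_two (by lia)
    grind
  rw [← Polynomial.map_map]
  refine irreducible_map_of_comp_X_pow_eq_preΨ_Wst hm (by lia) ?_ ?_ _
  · rwa [natDegree_map_eq_of_injective (MvPolynomial.map_injective _ (RingHom.injective _))]
  · have h := congrArg (Polynomial.map (MvPolynomial.map (ZMod.castHom (dvd_refl p) K))) hθ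
    rwa [map_comp, Polynomial.map_pow, map_X, ← map_preΨ, ← map_preΨ, map_Wst, map_Wst] at h
end

section
/- Let p ≥ 3 be a prime and K a field of characteristic p. Define σ_{s,t,x̃}(x) := −(ψ_{p+1,s,t}·ψ_{p−1,s,t})(x) + x·ψ_{p,s,t}²(x) − x̃·ψ_{p,s,t}²(x), whose zeros are the x-coordinates of points S on E_{s,t} with x([p]S) = x̃. Then the mod-p reduction of σ_{s,t,x̃}(x) is a monic polynomial of degree p² in x that is a polynomial in x^p; that is, there exists η_{s,t,x̃}(X) = X^p + Σ_{i=1}^{p−1}(b_{pi} + x̃·c_{pi−1}) X^{p−i} + (b_{p²} + x̃·c_{p²−1}) with b_k, c_k ∈ F_p[s,t] weight-homogeneous of weight k such that η_{s,t,x̃}(x^p) = σ_{s,t,x̃}(x) mod p. -/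
open WeierstrassCurve Polynomial

/-- The polynomial `σ_{s,t,x̃}(x) = -(ψ_{p+1}ψ_{p-1})(x) + (x - x̃)·ψ_p²(x)` mod `p`, whose
zeros are the `x`-coordinates of points `S` with `x([p]S) = x̃`; an element of
`(F_p[s,t][x̃])[x]`, where the extra variable `x̃` is `Polynomial.X` of the coefficient ring. -/
noncomputable def sigmaP (p : ℕ) [Fact p.Prime] :
    Polynomial (Polynomial (MvPolynomial (Fin 2) (ZMod p))) :=
  ((Wst (ZMod p)).Φ (p : ℤ)).map (Polynomial.C) -
    Polynomial.C (Polynomial.X) * ((Wst (ZMod p)).ΨSq (p : ℤ)).map (Polynomial.C)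

/-!
The abscissa of `[n]P` is the fraction `Φₙ / ΨSqₙ` in `x(P)`. Multiplication by `n` multiplies the
invariant differential `dx / ψ₂` by `n`; evaluating this at a generic point of the universal curve
over `ℤ` gives the Wronskian identity `Φₙ' ΨSqₙ - Φₙ ΨSqₙ' = n preΨ₂ₙ`, valid for every Weierstrass
curve by specialization. When `n` vanishes in the base ring, so does the Wronskian. On an elliptic
curve `Φₙ` and `ΨSqₙ` are coprime: a common root for `n` descends to one for about `n / 2`, because
the map `(x(Q) + x(R), x(Q) x(R)) ↦ (x(Q + R) + x(Q - R), x(Q + R) x(Q - R))` is a morphism of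
projective planes. Each of `Φₙ` and `ΨSqₙ` therefore divides its own derivative, so both derivatives
vanish. This transfers to an arbitrary curve through the universal one, whose discriminant is
nonzero. For `n = p` it says that `Φₚ - x̃ ΨSqₚ` is a polynomial in `x ^ p`, and the weights are
those of the division polynomials when `x` has degree `2` and `aᵢ` has degree `i`.
-/

section Points

variable {F : Type*} [Field F] {W : WeierstrassCurve F} {a b c d x y : F}

/-- The value at `(x, y)` of the division polynomial `ψₙ` of `W`. -/
noncomputable def psiAt (W : WeierstrassCurve F) (x y : F) (n : ℤ) : F :=
  (W.ψ n).evalEval x y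

/-- The numerator of the slope of the tangent to `W` at `(a, b)`, the denominator being `ψ₂`. -/
def tangentNum (W : WeierstrassCurve F) (a b : F) : F :=
  3 * a ^ 2 + 2 * W.a₂ * a + W.a₄ - W.a₁ * b

/-- The point `Q` is affine, with coordinates `(a, b)`. -/
def HasCoords (Q : W.toAffine.Point) (a b : F) : Prop :=
  ∃ h : W.toAffine.Nonsingular a b, Q = .some a b h

lemma psiAt_two (a b : F) : psiAt W a b 2 = 2 * b + W.a₁ * a + W.a₃ := by
  simp [psiAt, ψ₂, Affine.polynomialY, evalEval, add_assoc]

lemma psiAt_three : psiAt W x y 3 =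
    3 * x ^ 4 + W.b₂ * x ^ 3 + 3 * W.b₄ * x ^ 2 + 3 * W.b₆ * x + W.b₈ := by
  simp [psiAt, Ψ₃, evalEval]

lemma psiAt_four : psiAt W x y 4 =
    (2 * x ^ 6 + W.b₂ * x ^ 5 + 5 * W.b₄ * x ^ 4 + 10 * W.b₆ * x ^ 3 + 10 * W.b₈ * x ^ 2
      + (W.b₂ * W.b₈ - W.b₄ * W.b₆) * x + (W.b₄ * W.b₈ - W.b₆ ^ 2)) * psiAt W x y 2 := by
  simp [psiAt, preΨ₄, evalEval]

lemma psiAt_odd (n : ℤ) : psiAt W x y (2 * n + 1) =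
    psiAt W x y (n + 2) * psiAt W x y n ^ 3 - psiAt W x y (n - 1) * psiAt W x y (n + 1) ^ 3 := by
  simp [psiAt, W.ψ_odd n]

lemma psiAt_even (n : ℤ) : psiAt W x y (2 * n) * psiAt W x y 2 =
    psiAt W x y (n - 1) ^ 2 * psiAt W x y n * psiAt W x y (n + 2) -
      psiAt W x y (n - 2) * psiAt W x y n * psiAt W x y (n + 1) ^ 2 := by
  simpa [psiAt] using congrArg (evalEval x y) (W.ψ_even n)

lemma psiAt_two_addY (a b c l : F) :
    psiAt W (W.toAffine.addX a c l) (W.toAffine.addY a c b l) 2 =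
      -((2 * l + W.a₁) * (W.toAffine.addX a c l - a) + psiAt W a b 2) := by
  rw [psiAt_two, psiAt_two, Affine.addY, Affine.negAddY, Affine.negY]
  ring

variable {Q R P : W.toAffine.Point} {x₁ y₁ x₂ y₂ : F}

lemma HasCoords.equation (hQ : HasCoords Q a b) :
    b ^ 2 + W.a₁ * a * b + W.a₃ * b = a ^ 3 + W.a₂ * a ^ 2 + W.a₄ * a + W.a₆ :=
  (W.toAffine.equation_iff a b).mp hQ.1.1

lemma HasCoords.a₆_eq (hQ : HasCoords Q a b) :
    W.a₆ = b ^ 2 + W.a₁ * a * b + W.a₃ * b - (a ^ 3 + W.a₂ * a ^ 2 + W.a₄ * a) := by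
  rw [hQ.equation]
  ring

lemma HasCoords.a₄_eq (hQ : HasCoords Q a b) (hR : HasCoords R c d) (hac : a ≠ c) :
    W.a₄ = (b ^ 2 + W.a₁ * a * b + W.a₃ * b - (a ^ 3 + W.a₂ * a ^ 2) -
      (d ^ 2 + W.a₁ * c * d + W.a₃ * d - (c ^ 3 + W.a₂ * c ^ 2))) / (a - c) := by
  rw [eq_div_iff (sub_ne_zero.mpr hac)]
  linear_combination hR.equation - hQ.equation

lemma HasCoords.psiAt_two_sq (hQ : HasCoords Q a b) :
    psiAt W a b 2 ^ 2 = 4 * a ^ 3 + W.b₂ * a ^ 2 + 2 * W.b₄ * a + W.b₆ := by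
  rw [psiAt_two, b₂, b₄, b₆]
  linear_combination 4 * hQ.equation

lemma HasCoords.unique (hQ : HasCoords Q a b) (hQ' : HasCoords Q c d) : a = c ∧ b = d := by
  obtain ⟨h, rfl⟩ := hQ
  obtain ⟨h', e⟩ := hQ'
  simpa using e

lemma HasCoords.neg (hQ : HasCoords Q a b) : HasCoords (-Q) a (W.toAffine.negY a b) := by
  obtain ⟨h, rfl⟩ := hQ
  exact ⟨_, Affine.Point.neg_some h⟩

lemma HasCoords.tangentNum_left (hQ : HasCoords Q a b) (hR : HasCoords R c d) (hac : a ≠ c) :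
    tangentNum W a b = (b - d) / (a - c) * psiAt W a b 2 +
      (a - c) * (a - W.toAffine.addX a c ((b - d) / (a - c))) := by
  have hac' := sub_ne_zero.mpr hac
  rw [tangentNum, psiAt_two, Affine.addX]
  field_simp
  linear_combination hR.equation - hQ.equation

lemma HasCoords.tangentNum_right (hQ : HasCoords Q a b) (hR : HasCoords R c d) (hac : a ≠ c) :
    tangentNum W c d = (b - d) / (a - c) * psiAt W c d 2 +
      (c - a) * (c - W.toAffine.addX a c ((b - d) / (a - c))) := by
  have hac' := sub_ne_zero.mpr hac
  rw [tangentNum, psiAt_two, Affine.addX]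
  field_simp
  linear_combination (a - c) * (hR.equation - hQ.equation)

variable [DecidableEq F]

lemma HasCoords.add (hQ : HasCoords Q a b) (hR : HasCoords R c d) (hac : a ≠ c) :
    HasCoords (Q + R) (W.toAffine.addX a c ((b - d) / (a - c)))
      (W.toAffine.addY a c b ((b - d) / (a - c))) := by
  obtain ⟨h, rfl⟩ := hQ
  obtain ⟨h', rfl⟩ := hR
  rw [← Affine.slope_of_X_ne hac]
  exact ⟨_, Affine.Point.add_some fun hxy ↦ hac hxy.1⟩

lemma HasCoords.two_nsmul (hQ : HasCoords Q a b) (hψ : psiAt W a b 2 ≠ 0) :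
    HasCoords (2 • Q) (W.toAffine.addX a a (tangentNum W a b / psiAt W a b 2))
      (W.toAffine.addY a a b (tangentNum W a b / psiAt W a b 2)) := by
  obtain ⟨h, rfl⟩ := hQ
  have hgap : b - W.toAffine.negY a b = psiAt W a b 2 := by
    rw [psiAt_two, Affine.negY]
    ring
  have hb : b ≠ W.toAffine.negY a b := sub_ne_zero.mp (hgap ▸ hψ)
  rw [tangentNum, ← hgap, ← Affine.slope_of_Y_ne rfl hb, _root_.two_nsmul]
  exact ⟨_, Affine.Point.add_some fun hxy ↦ hb hxy.2⟩

lemma HasCoords.sub_eq_addX (hQ : HasCoords Q a b) (hR : HasCoords R c d) (hac : a ≠ c)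
    (hsub : HasCoords (Q - R) x₂ y₂) :
    x₂ = W.toAffine.addX a c ((b - W.toAffine.negY c d) / (a - c)) := by
  rw [sub_eq_add_neg] at hsub
  exact (hsub.unique (hQ.add hR.neg hac)).1

lemma HasCoords.sub_abscissae (hQ : HasCoords Q a b) (hR : HasCoords R c d) (hac : a ≠ c)
    (hadd : HasCoords (Q + R) x₁ y₁) (hsub : HasCoords (Q - R) x₂ y₂) :
    (x₂ - x₁) * (a - c) ^ 2 = psiAt W a b 2 * psiAt W c d 2 := by
  have hac' := sub_ne_zero.mpr hac
  rw [(hadd.unique (hQ.add hR hac)).1, hQ.sub_eq_addX hR hac hsub]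
  rw [Affine.addX, Affine.addX, Affine.negY, psiAt_two, psiAt_two]
  field_simp
  ring

lemma HasCoords.add_abscissae (hQ : HasCoords Q a b) (hR : HasCoords R c d) (hac : a ≠ c)
    (hadd : HasCoords (Q + R) x₁ y₁) (hsub : HasCoords (Q - R) x₂ y₂) :
    (x₁ + x₂) * (a - c) ^ 2 =
      2 * (a * c) * (a + c) + W.b₂ * (a * c) + W.b₄ * (a + c) + W.b₆ := by
  have hac' := sub_ne_zero.mpr hac
  rw [(hadd.unique (hQ.add hR hac)).1, hQ.sub_eq_addX hR hac hsub]
  rw [Affine.addX, Affine.addX, Affine.negY, b₂, b₄, b₆]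
  field_simp
  linear_combination 2 * hQ.equation + 2 * hR.equation

lemma HasCoords.mul_abscissae (hQ : HasCoords Q a b) (hR : HasCoords R c d) (hac : a ≠ c)
    (hadd : HasCoords (Q + R) x₁ y₁) (hsub : HasCoords (Q - R) x₂ y₂) :
    x₁ * x₂ * (a - c) ^ 2 = (a * c) ^ 2 - W.b₄ * (a * c) - W.b₆ * (a + c) - W.b₈ := by
  have hac' := sub_ne_zero.mpr hac
  rw [(hadd.unique (hQ.add hR hac)).1, hQ.sub_eq_addX hR hac hsub]
  rw [Affine.addX, Affine.addX, Affine.negY, b₄, b₆, b₈, hQ.a₆_eq, hQ.a₄_eq hR hac]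
  field_simp
  ring

lemma HasCoords.abscissa_two_nsmul (hQ : HasCoords Q a b) (hψ : psiAt W a b 2 ≠ 0)
    (hdouble : HasCoords (2 • Q) x₁ y₁) :
    x₁ * psiAt W a b 2 ^ 2 = a ^ 4 - W.b₄ * a ^ 2 - 2 * W.b₆ * a - W.b₈ := by
  rw [(hdouble.unique (hQ.two_nsmul hψ)).1, Affine.addX, tangentNum]
  field_simp
  rw [psiAt_two, b₄, b₆, b₈, hQ.a₆_eq]
  ring

/-- The classical formula `x([n]P) = x - ψₙ₊₁ψₙ₋₁ / ψₙ²` at a point `P = (x, y)`, with `[n]P`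
affine with coordinates `(a, b)`; denominators are cleared. -/
def MulFormula (P : W.toAffine.Point) (x y : F) (n : ℤ) (a b : F) : Prop :=
  HasCoords (n • P) a b ∧
    (x - a) * psiAt W x y n ^ 2 = psiAt W x y (n + 1) * psiAt W x y (n - 1)

variable {n : ℤ} {a₀ b₀ a₁ b₁ a₂ b₂ : F}

lemma MulFormula.ne (h : MulFormula P x y n a b) (h₁ : psiAt W x y (n + 1) ≠ 0)
    (h₂ : psiAt W x y (n - 1) ≠ 0) : a ≠ x := by
  rintro rfl
  apply mul_ne_zero h₁ h₂
  rw [← h.2, sub_self, zero_mul]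

lemma psiAt_two_mul_add_one (h : MulFormula P x y n a b) (h' : MulFormula P x y (n + 1) c d) :
    psiAt W x y (2 * n + 1) = psiAt W x y n ^ 2 * psiAt W x y (n + 1) ^ 2 * (a - c) := by
  obtain ⟨-, e⟩ := h
  obtain ⟨-, e'⟩ := h'
  rw [add_sub_cancel_right, add_assoc, one_add_one_eq_two] at e'
  rw [psiAt_odd]
  linear_combination (-psiAt W x y n ^ 2) * e' + psiAt W x y (n + 1) ^ 2 * e

lemma MulFormula.psiAt_two_mul_pow_of_neighbors (hP : HasCoords P x y)
    (h₀ : MulFormula P x y (n - 1) a₀ b₀) (h₁ : MulFormula P x y n a₁ b₁)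
    (h₂ : MulFormula P x y (n + 1) a₂ b₂) (hψ₀ : psiAt W x y (n - 1) ≠ 0)
    (hψ₂ : psiAt W x y (n + 1) ≠ 0) (hψ : psiAt W x y 2 ≠ 0) :
    psiAt W a₁ b₁ 2 * psiAt W x y n ^ 4 = psiAt W x y (2 * n) := by
  have e := h₁.1.sub_abscissae hP (h₁.ne hψ₂ hψ₀) (add_one_zsmul P n ▸ h₂.1)
    (sub_one_zsmul P n ▸ h₀.1)
  obtain ⟨-, e₀⟩ := h₀
  obtain ⟨-, e₁⟩ := h₁
  obtain ⟨-, e₂⟩ := h₂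
  rw [sub_add_cancel, sub_sub, one_add_one_eq_two] at e₀
  rw [add_sub_cancel_right, add_assoc, one_add_one_eq_two] at e₂
  apply mul_right_cancel₀ hψ
  rw [psiAt_even]
  linear_combination (-psiAt W x y n ^ 4) * e +
    (a₀ - a₂) * ((x - a₁) * psiAt W x y n ^ 2 + psiAt W x y (n + 1) * psiAt W x y (n - 1)) * e₁
    + psiAt W x y (n - 1) ^ 2 * e₂ - psiAt W x y (n + 1) ^ 2 * e₀

lemma psiAt_two_mul_pow_of_one (hP : HasCoords P x y) (h : MulFormula P x y 1 a b) :
    psiAt W a b 2 * psiAt W x y 1 ^ 4 = psiAt W x y (2 * 1) := by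
  obtain ⟨rfl, rfl⟩ := hP.unique (one_zsmul P ▸ h.1)
  simp [psiAt]

lemma psiAt_two_mul_pow_of_two (hP : HasCoords P x y) (hψ : psiAt W x y 2 ≠ 0)
    (h : MulFormula P x y 2 a b) :
    psiAt W a b 2 * psiAt W x y 2 ^ 4 = psiAt W x y (2 * 2) := by
  have hP₂ : HasCoords (2 • P) a b := ofNat_zsmul P 2 ▸ h.1
  obtain ⟨rfl, rfl⟩ := hP₂.unique (hP.two_nsmul hψ)
  rw [show (2 * 2 : ℤ) = 4 from rfl, psiAt_four, psiAt_two_addY, Affine.addX, tangentNum]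
  simp only [WeierstrassCurve.b₂, b₄, b₆, b₈, hP.a₆_eq]
  field_simp
  rw [psiAt_two]
  ring

lemma mulFormula_one (hP : HasCoords P x y) : MulFormula P x y 1 x y :=
  ⟨by rwa [one_zsmul], by simp [psiAt]⟩

lemma exists_mulFormula_two (hP : HasCoords P x y) (hψ : psiAt W x y 2 ≠ 0) :
    ∃ a b, MulFormula P x y 2 a b := by
  have hdouble := hP.two_nsmul hψ
  have hψ₁ : psiAt W x y 1 = 1 := by simp [psiAt]
  refine ⟨_, _, by rwa [ofNat_zsmul], ?_⟩
  rw [show (2 : ℤ) + 1 = 3 from rfl, show (2 : ℤ) - 1 = 1 from rfl, psiAt_three, hψ₁, sub_mul,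
    hP.abscissa_two_nsmul hψ hdouble, hP.psiAt_two_sq]
  ring

/-- The step from `n` and `n + 1` to `2n + 1`, as `(n + 1)P - nP = P`. -/
lemma MulFormula.exists_two_mul_add_one (hP : HasCoords P x y)
    (h : MulFormula P x y n a b) (h' : MulFormula P x y (n + 1) c d)
    (hb : psiAt W a b 2 * psiAt W x y n ^ 4 = psiAt W x y (2 * n))
    (hd : psiAt W c d 2 * psiAt W x y (n + 1) ^ 4 = psiAt W x y (2 * (n + 1)))
    (hψ : psiAt W x y (2 * n + 1) ≠ 0) : ∃ a b, MulFormula P x y (2 * n + 1) a b := by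
  have hodd := psiAt_two_mul_add_one h h'
  have hca : c ≠ a := by
    rintro rfl
    exact hψ (by rw [hodd, sub_self, mul_zero])
  have hsub : HasCoords ((n + 1) • P - n • P) x y := by
    rwa [add_one_zsmul, add_sub_cancel_left]
  have hadd := h'.1.add h.1 hca
  have e := h'.1.sub_abscissae h.1 hca hadd hsub
  rw [← add_smul, show n + 1 + n = 2 * n + 1 by ring] at hadd
  refine ⟨_, _, hadd, ?_⟩
  rw [add_sub_cancel_right, show 2 * n + 1 + 1 = 2 * (n + 1) by ring, ← hb, ← hd, hodd]
  linear_combination psiAt W x y n ^ 4 * psiAt W x y (n + 1) ^ 4 * e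

lemma MulFormula.exists_two_mul (hP : HasCoords P x y) (h₀ : MulFormula P x y (n - 1) a₀ b₀)
    (h₁ : MulFormula P x y n a₁ b₁) (h₂ : MulFormula P x y (n + 1) a₂ b₂)
    (hb : psiAt W a₁ b₁ 2 * psiAt W x y n ^ 4 = psiAt W x y (2 * n))
    (hψ₀ : psiAt W x y (n - 1) ≠ 0) (hψ₂ : psiAt W x y (n + 1) ≠ 0)
    (hψ : psiAt W x y (2 * n) ≠ 0) : ∃ a b, MulFormula P x y (2 * n) a b := by
  have hne := h₁.ne hψ₂ hψ₀
  have hadd : HasCoords (n • P + P) a₂ b₂ := add_one_zsmul P n ▸ h₂.1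
  have hsub : HasCoords (n • P - P) a₀ b₀ := by
    rw [sub_eq_add_neg, ← sub_one_zsmul]
    exact h₀.1
  have hψb : psiAt W a₁ b₁ 2 ≠ 0 := left_ne_zero_of_mul (hb ▸ hψ)
  have hdouble := h₁.1.two_nsmul hψb
  have hdup := h₁.1.abscissa_two_nsmul hψb hdouble
  generalize W.toAffine.addX a₁ a₁ _ = a at hdouble hdup
  rw [← natCast_zsmul, smul_smul, Nat.cast_two] at hdouble
  refine ⟨_, _, hdouble, ?_⟩
  have key : psiAt W a₁ b₁ 2 ^ 2 * (x - a) = (x - a₁) ^ 2 * (a₁ - a₂) * (a₀ - a₁) := by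
    linear_combination -hdup + x * h₁.1.psiAt_two_sq - a₁ * h₁.1.add_abscissae hP hne hadd hsub
      + h₁.1.mul_abscissae hP hne hadd hsub
  have hpred : psiAt W x y (2 * n - 1) =
      psiAt W x y (n - 1) ^ 2 * psiAt W x y n ^ 2 * (a₀ - a₁) := by
    rw [show 2 * n - 1 = 2 * (n - 1) + 1 by ring,
      psiAt_two_mul_add_one h₀ ((sub_add_cancel n 1).symm ▸ h₁), sub_add_cancel]
  rw [← hb, psiAt_two_mul_add_one h₁ h₂, hpred]
  linear_combination psiAt W x y n ^ 8 * key + (a₁ - a₂) * (a₀ - a₁) * psiAt W x y n ^ 4 *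
    ((x - a₁) * psiAt W x y n ^ 2 + psiAt W x y (n + 1) * psiAt W x y (n - 1)) * h₁.2

lemma psiAt_two_mul_pow_of_forall_lt (hP : HasCoords P x y)
    (hψ : ∀ m : ℤ, 0 < m → psiAt W x y m ≠ 0) {m : ℤ} (hm : 0 < m) (hmn : m < 3 ∨ m + 1 < n)
    (ih : ∀ k < n, 0 < k → ∃ a b, MulFormula P x y k a b) (h : MulFormula P x y m a b) :
    psiAt W a b 2 * psiAt W x y m ^ 4 = psiAt W x y (2 * m) := by
  obtain rfl | rfl | hm : m = 1 ∨ m = 2 ∨ 2 < m := by omega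
  · exact psiAt_two_mul_pow_of_one hP h
  · exact psiAt_two_mul_pow_of_two hP (hψ 2 two_pos) h
  obtain ⟨a₀, b₀, h₀⟩ := ih (m - 1) (by omega) (by omega)
  obtain ⟨a₂, b₂, h₂⟩ := ih (m + 1) (by omega) (by omega)
  exact h₀.psiAt_two_mul_pow_of_neighbors hP h h₂ (hψ _ (by omega)) (hψ _ (by omega))
    (hψ 2 two_pos)

theorem exists_mulFormula (hP : HasCoords P x y) (hψ : ∀ m : ℤ, 0 < m → psiAt W x y m ≠ 0)
    (hn : 0 < n) : ∃ a b, MulFormula P x y n a b := by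
  induction n using Int.strongRec (m := 1) with
  | lt n hn' => omega
  | ge n _ ih =>
    rcases Int.even_or_odd' n with ⟨k, rfl | rfl⟩
    · obtain rfl | hk : k = 1 ∨ 1 < k := by omega
      · exact exists_mulFormula_two hP (hψ 2 two_pos)
      obtain ⟨a₀, b₀, h₀⟩ := ih (k - 1) (by omega) (by omega)
      obtain ⟨a₁, b₁, h₁⟩ := ih k (by omega) (by omega)
      obtain ⟨a₂, b₂, h₂⟩ := ih (k + 1) (by omega) (by omega)
      have hb := psiAt_two_mul_pow_of_forall_lt hP hψ (by omega) (by omega) ih h₁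
      exact h₀.exists_two_mul hP h₁ h₂ hb (hψ _ (by omega)) (hψ _ (by omega)) (hψ _ hn)
    · obtain rfl | hk : k = 0 ∨ 0 < k := by omega
      · exact ⟨x, y, mulFormula_one hP⟩
      obtain ⟨a, b, h⟩ := ih k (by omega) (by omega)
      obtain ⟨c, d, h'⟩ := ih (k + 1) (by omega) (by omega)
      have hb := psiAt_two_mul_pow_of_forall_lt hP hψ hk (by omega) ih h
      have hd := psiAt_two_mul_pow_of_forall_lt hP hψ (by omega) (by omega) ih h'
      exact h.exists_two_mul_add_one hP h' hb hd (hψ _ hn)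

lemma MulFormula.psiAt_two_mul_pow (hP : HasCoords P x y)
    (hψ : ∀ m : ℤ, 0 < m → psiAt W x y m ≠ 0) (hn : 0 < n) (h : MulFormula P x y n a b) :
    psiAt W a b 2 * psiAt W x y n ^ 4 = psiAt W x y (2 * n) :=
  psiAt_two_mul_pow_of_forall_lt hP hψ hn (.inr (lt_add_one (n + 1)))
    (fun _ _ hk ↦ exists_mulFormula hP hψ hk) h

lemma MulFormula.psiAt_two_ne_zero (hP : HasCoords P x y)
    (hψ : ∀ m : ℤ, 0 < m → psiAt W x y m ≠ 0) (hn : 0 < n) (h : MulFormula P x y n a b) :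
    psiAt W a b 2 ≠ 0 :=
  left_ne_zero_of_mul (h.psiAt_two_mul_pow hP hψ hn ▸ hψ (2 * n) (by omega))

end Points

section Derivation

variable {k F : Type*} [CommRing k] [Field F] [Algebra k F] {W : WeierstrassCurve k}
  {D : Derivation k F F} {Q R P : (W.map (algebraMap k F)).toAffine.Point}
  {a b c d x y x₁ y₁ m n : F}

/-- At `(a, b)` the derivation `D` is `m` times the invariant derivation of the curve, the one with
`x ↦ ψ₂` that is dual to the invariant differential `dx / ψ₂`. -/
def HasSpeed (W : WeierstrassCurve k) (D : Derivation k F F) (a b m : F) : Prop :=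
  D a = m * psiAt (W.map (algebraMap k F)) a b 2 ∧
    D b = m * tangentNum (W.map (algebraMap k F)) a b

lemma HasCoords.hasSpeed (hQ : HasCoords Q a b) (hψ : psiAt (W.map (algebraMap k F)) a b 2 ≠ 0)
    (ha : D a = m * psiAt (W.map (algebraMap k F)) a b 2) : HasSpeed W D a b m := by
  refine ⟨ha, mul_left_cancel₀ hψ ?_⟩
  have e := congrArg D hQ.equation
  simp only [map_add, D.leibniz, D.leibniz_pow, smul_eq_mul, nsmul_eq_mul, map_a₁, map_a₂, map_a₃,
    map_a₄, map_a₆, D.map_algebraMap, ha] at e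
  rw [psiAt_two] at e ⊢
  simp only [tangentNum, map_a₁, map_a₂, map_a₃, map_a₄] at e ⊢
  push_cast at e
  linear_combination e

lemma derivation_addX (D : Derivation k F F) (a c l : F) :
    D ((W.map (algebraMap k F)).toAffine.addX a c l) =
      (2 * l + algebraMap k F W.a₁) * D l - D a - D c := by
  simp only [Affine.addX, map_sub, map_add, D.leibniz, D.leibniz_pow, map_a₁, map_a₂,
    D.map_algebraMap, smul_eq_mul, nsmul_eq_mul]
  push_cast
  ring

lemma HasSpeed.derivation_psiAt_two (h : HasSpeed W D a b m) :
    D (psiAt (W.map (algebraMap k F)) a b 2) = m * (2 * tangentNum (W.map (algebraMap k F)) a b +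
      algebraMap k F W.a₁ * psiAt (W.map (algebraMap k F)) a b 2) := by
  rw [psiAt_two, two_mul b]
  simp only [map_add, D.leibniz, map_a₁, map_a₃, D.map_algebraMap, h.1, h.2, smul_eq_mul]
  rw [psiAt_two, map_a₁, map_a₃]
  ring

lemma HasSpeed.derivation_tangentNum (h : HasSpeed W D a b m) :
    D (tangentNum (W.map (algebraMap k F)) a b) =
      m * ((6 * a + 2 * algebraMap k F W.a₂) * psiAt (W.map (algebraMap k F)) a b 2 -
        algebraMap k F W.a₁ * tangentNum (W.map (algebraMap k F)) a b) := by
  have hD₂ : D 2 = 0 := mod_cast D.map_natCast 2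
  have hD₃ : D 3 = 0 := mod_cast D.map_natCast 3
  rw [tangentNum]
  simp only [map_add, map_sub, D.leibniz, D.leibniz_pow, map_a₁, map_a₂, map_a₄, D.map_algebraMap,
    h.1, h.2, hD₂, hD₃, smul_eq_mul, nsmul_eq_mul]
  rw [tangentNum, map_a₁, map_a₂, map_a₄]
  push_cast
  ring

lemma HasSpeed.derivation_slope (hQ : HasCoords Q a b) (hR : HasCoords R c d)
    (hm : HasSpeed W D a b m) (hn : HasSpeed W D c d n) (hac : a ≠ c) :
    D ((b - d) / (a - c)) =
      m * (a - (W.map (algebraMap k F)).toAffine.addX a c ((b - d) / (a - c))) +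
        n * (c - (W.map (algebraMap k F)).toAffine.addX a c ((b - d) / (a - c))) := by
  have hac' := sub_ne_zero.mpr hac
  rw [D.leibniz_div, map_sub, map_sub, hm.1, hm.2, hn.1, hn.2, hQ.tangentNum_left hR hac,
    hQ.tangentNum_right hR hac]
  simp only [smul_eq_mul]
  field_simp
  ring

variable [DecidableEq F]

lemma HasSpeed.derivation_add (hQ : HasCoords Q a b) (hR : HasCoords R c d)
    (hm : HasSpeed W D a b m) (hn : HasSpeed W D c d n) (hac : a ≠ c)
    (hadd : HasCoords (Q + R) x₁ y₁) :
    D x₁ = (m + n) * psiAt (W.map (algebraMap k F)) x₁ y₁ 2 := by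
  obtain ⟨rfl, rfl⟩ := hadd.unique (hQ.add hR hac)
  have hψ : psiAt (W.map (algebraMap k F)) a b 2 - psiAt (W.map (algebraMap k F)) c d 2 =
      (2 * ((b - d) / (a - c)) + algebraMap k F W.a₁) * (a - c) := by
    rw [add_mul, mul_assoc, div_mul_cancel₀ _ (sub_ne_zero.mpr hac), psiAt_two, psiAt_two, map_a₁]
    ring
  rw [derivation_addX, hm.derivation_slope hQ hR hn hac, hm.1, hn.1, psiAt_two_addY, map_a₁]
  linear_combination n * hψ

lemma HasSpeed.derivation_two_nsmul (hQ : HasCoords Q a b) (hm : HasSpeed W D a b m)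
    (hψ : psiAt (W.map (algebraMap k F)) a b 2 ≠ 0) (hdouble : HasCoords (2 • Q) x₁ y₁) :
    D x₁ = 2 * m * psiAt (W.map (algebraMap k F)) x₁ y₁ 2 := by
  obtain ⟨rfl, rfl⟩ := hdouble.unique (hQ.two_nsmul hψ)
  rw [derivation_addX, D.leibniz_div, hm.derivation_psiAt_two, hm.derivation_tangentNum, hm.1,
    psiAt_two_addY, map_a₁, Affine.addX, map_a₁, map_a₂]
  simp only [smul_eq_mul]
  field_simp
  ring

/-- Multiplication by `n` multiplies the invariant differential by `n`. -/
theorem MulFormula.derivation_eq (hP : HasCoords P x y)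
    (hψ : ∀ m : ℤ, 0 < m → psiAt (W.map (algebraMap k F)) x y m ≠ 0)
    (hD : D x = psiAt (W.map (algebraMap k F)) x y 2) {n : ℤ} (hn : 0 < n)
    (h : MulFormula P x y n a b) : D a = n * psiAt (W.map (algebraMap k F)) a b 2 := by
  have hspeed : HasSpeed W D x y 1 := hP.hasSpeed (hψ 2 two_pos) (by rw [hD, one_mul])
  induction n, (show 1 ≤ n from hn) using Int.leInduction generalizing a b with
  | base =>
    obtain ⟨rfl, rfl⟩ := hP.unique (one_zsmul P ▸ h.1)
    rw [Int.cast_one, one_mul, hD]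
  | succ n hn₁ ih =>
    obtain rfl | hn₂ := hn₁.eq_or_lt
    · rw [hspeed.derivation_two_nsmul hP (hψ 2 two_pos) (ofNat_zsmul P 2 ▸ h.1)]
      norm_num
    obtain ⟨c, d, h'⟩ := exists_mulFormula hP hψ (n := n) (by omega)
    have hspeed' := h'.1.hasSpeed (h'.psiAt_two_ne_zero hP hψ (by omega)) (ih (by omega) h')
    rw [hspeed'.derivation_add h'.1 hP hspeed (h'.ne (hψ _ hn) (hψ _ (by omega)))
      (add_one_zsmul P n ▸ h.1), Int.cast_add, Int.cast_one]

end Derivation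

section AddSubMap

variable {F : Type*} [Field F] [DecidableEq F] {W : WeierstrassCurve F}
  {Q R : W.toAffine.Point} {a b c d x₁ y₁ x₂ y₂ : F}

lemma HasCoords.eval_addSubMap (hQ : HasCoords Q a b) (hR : HasCoords R c d) (hac : a ≠ c)
    (hadd : HasCoords (Q + R) x₁ y₁) (hsub : HasCoords (Q - R) x₂ y₂) (t : F) (i : Fin 3) :
    (addSubMap W i).eval (t • ![a * c, a + c, 1]) =
      ((t * (a - c)) ^ 2 • ![x₁ * x₂, x₁ + x₂, 1]) i := by
  fin_cases i <;> simp only [addSubMap, Fin.zero_eta, Fin.mk_one, Fin.reduceFinMk, Matrix.smul_cons,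
    Matrix.smul_empty, Matrix.cons_val, Pi.smul_apply, smul_eq_mul, mul_one, map_add, map_sub,
    map_mul, map_pow, MvPolynomial.eval_X, MvPolynomial.eval_C]
  · linear_combination -t ^ 2 * hQ.mul_abscissae hR hac hadd hsub
  · linear_combination -t ^ 2 * hQ.add_abscissae hR hac hadd hsub
  · ring

lemma HasCoords.eval_addSubMap_self (hQ : HasCoords Q a b) (hψ : psiAt W a b 2 ≠ 0)
    (hdouble : HasCoords (2 • Q) x₁ y₁) (t : F) (i : Fin 3) :
    (addSubMap W i).eval (t • ![a * a, a + a, 1]) =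
      ((t * psiAt W a b 2) ^ 2 • ![x₁, 1, 0]) i := by
  fin_cases i <;> simp only [addSubMap, Fin.zero_eta, Fin.mk_one, Fin.reduceFinMk, Matrix.smul_cons,
    Matrix.smul_empty, Matrix.cons_val, Pi.smul_apply, smul_eq_mul, mul_one, map_add, map_sub,
    map_mul, map_pow, MvPolynomial.eval_X, MvPolynomial.eval_C]
  · linear_combination -t ^ 2 * hQ.abscissa_two_nsmul hψ hdouble
  · linear_combination -t ^ 2 * hQ.psiAt_two_sq
  · ring

end AddSubMap

section Abscissa

open Affine.CoordinateRing

variable {F : Type*} [Field F] {W : WeierstrassCurve F} {x y : F}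

lemma evalEval_eq_of_mk_eq (h : W.toAffine.Equation x y) {f g : F[X][X]}
    (hfg : mk W.toAffine f = mk W.toAffine g) : f.evalEval x y = g.evalEval x y := by
  obtain ⟨q, hq⟩ := AdjoinRoot.mk_eq_mk.mp hfg
  rw [← sub_eq_zero, ← evalEval_sub, hq, evalEval_mul, h, zero_mul]

lemma psiAt_sq (h : W.toAffine.Equation x y) (n : ℤ) :
    psiAt W x y n ^ 2 = (W.ΨSq n).eval x := by
  rw [psiAt, ← evalEval_pow, ← evalEval_C]
  exact evalEval_eq_of_mk_eq h (by rw [map_pow, mk_ψ, mk_Ψ_sq])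

lemma sub_psiAt_succ_mul_psiAt_pred (h : W.toAffine.Equation x y) (n : ℤ) :
    x * psiAt W x y n ^ 2 - psiAt W x y (n + 1) * psiAt W x y (n - 1) = (W.Φ n).eval x := by
  rw [← evalEval_C x y, ← evalEval_eq_of_mk_eq h (mk_φ W n)]
  simp [WeierstrassCurve.φ, psiAt, evalEval]

lemma psiAt_two_mul (h : W.toAffine.Equation x y) (n : ℤ) :
    psiAt W x y (2 * n) = (W.preΨ (2 * n)).eval x * psiAt W x y 2 := by
  rw [psiAt, evalEval_eq_of_mk_eq h (mk_ψ W (2 * n)), WeierstrassCurve.Ψ, if_pos (even_two_mul n),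
    evalEval_mul, evalEval_C, psiAt, ψ_two]

end Abscissa

section GenericPoint

open KaehlerDifferential in
lemma exists_derivation_algebraMap {R S T : Type*} [CommRing R] [CommRing S] [CommRing T]
    [Algebra R S] [Algebra R T] [Algebra S T] [IsScalarTower R S T] [Algebra.FormallyEtale S T]
    (d : Derivation R S T) : ∃ D : Derivation R T T, ∀ s, D (algebraMap S T s) = d s := by
  have hΩ := isBaseChange_of_formallyEtale R S T
  refine ⟨(hΩ.lift d.liftKaehlerDifferential).compDer (KaehlerDifferential.D R T), fun s ↦ ?_⟩
  change hΩ.lift _ (KaehlerDifferential.D R T (algebraMap S T s)) = d s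
  rw [← map_D R R S T, hΩ.lift_eq, Derivation.liftKaehlerDifferential_comp_D]

universe u

variable {R : Type u} [CommRing R]

/-- `(x, y)` is a generic point of `W`: it lies on `W`, and its abscissa satisfies no algebraic
equation over the base ring. -/
structure IsGenericPointOn (W : WeierstrassCurve R) {F : Type*} [Field F] [Algebra R F]
    (x y : F) : Prop where
  equation : (W.map (algebraMap R F)).toAffine.Equation x y
  transcendental : Transcendental R x

lemma exists_equation {F : Type*} [Field F] [IsAlgClosed F] (W : WeierstrassCurve F) (x : F) :
    ∃ y, W.toAffine.Equation x y := by
  obtain ⟨y, hy⟩ := IsAlgClosed.exists_root (W.toAffine.polynomial.map (evalRingHom x))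
    (by
      rw [(Affine.monic_polynomial).degree_map, Affine.degree_polynomial]
      norm_num)
  exact ⟨y, by rwa [Affine.Equation, ← map_evalRingHom_eval]⟩

lemma exists_isGenericPointOn [IsDomain R] [CharZero R] (W : WeierstrassCurve R) :
    ∃ (F : Type u) (_ : Field F) (_ : Algebra R F) (x y : F) (D : Derivation R F F),
      IsGenericPointOn W x y ∧ D x = psiAt (W.map (algebraMap R F)) x y 2 := by
  let K := FractionRing R[X]
  let F := AlgebraicClosure K
  have : Algebra.FormallyEtale R[X] K := .of_isLocalization (nonZeroDivisors R[X])
  have : Algebra.FormallyEtale K F := .of_isSeparable K F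
  have : Algebra.FormallyEtale R[X] F := .comp R[X] K F
  obtain ⟨y, hy⟩ := exists_equation (W.map (algebraMap R F)) (algebraMap R[X] F X)
  obtain ⟨D, hD⟩ := exists_derivation_algebraMap (T := F)
    (mkDerivation R (psiAt (W.map (algebraMap R F)) (algebraMap R[X] F X) y 2))
  have : FaithfulSMul R[X] F := .trans R[X] K F
  refine ⟨F, inferInstance, inferInstance, _, y, D, ⟨hy, ?_⟩, by rw [hD, mkDerivation_X]⟩
  exact (transcendental_algebraMap_iff (FaithfulSMul.algebraMap_injective R[X] F)).mpr
    (transcendental_X R)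

/-- The triple `(ac : ad + bc : bd)` of symmetric functions of the abscissae `a / b = x([m]P)` and
`c / d = x([n]P)`, as polynomials in `x(P)`. -/
noncomputable def divSym (W : WeierstrassCurve R) (m n : ℤ) : Fin 3 → R[X] :=
  ![W.Φ m * W.Φ n, W.Φ m * W.ΨSq n + W.Φ n * W.ΨSq m, W.ΨSq m * W.ΨSq n]

lemma divSym_zero_right (W : WeierstrassCurve R) (m : ℤ) :
    divSym W m 0 = ![W.Φ m, W.ΨSq m, 0] := by
  simp [divSym]

lemma map_addSubMap {S : Type*} [CommRing S] (W : WeierstrassCurve R) (f : R →+* S) (i : Fin 3) :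
    MvPolynomial.map f (addSubMap W i) = addSubMap (W.map f) i := by
  fin_cases i <;> simp [addSubMap, map_ofNat f]

lemma map_aeval_addSubMap {S A B : Type*} [CommRing S] [CommRing A] [CommRing B] [Algebra R A]
    [Algebra S B] (W : WeierstrassCurve R) {f : R →+* S} {g : A →+* B}
    (hfg : g.comp (algebraMap R A) = (algebraMap S B).comp f) (v : Fin 3 → A) (i : Fin 3) :
    g (MvPolynomial.aeval v (addSubMap W i)) =
      MvPolynomial.aeval (fun j ↦ g (v j)) (addSubMap (W.map f) i) := by
  rw [MvPolynomial.map_aeval, hfg, MvPolynomial.aeval_def, ← map_addSubMap, MvPolynomial.eval₂_map]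
  rfl

lemma aeval_aeval_addSubMap {K : Type*} [Field K] [Algebra R K] (W : WeierstrassCurve R) (x : K)
    (v : Fin 3 → R[X]) (i : Fin 3) : aeval x (MvPolynomial.aeval v (addSubMap W i)) =
      (addSubMap (W.map (algebraMap R K)) i).eval fun j ↦ aeval x (v j) := by
  rw [← MvPolynomial.coe_aeval_eq_eval]
  exact map_aeval_addSubMap W (f := algebraMap R K) (g := (aeval x).toRingHom)
    (aeval x).comp_algebraMap v i

namespace IsGenericPointOn

variable {W : WeierstrassCurve R} {F : Type*} [Field F] [Algebra R F] {x y : F} {n : ℤ} {a b : F}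

lemma aeval_ΨSq (h : IsGenericPointOn W x y) (n : ℤ) :
    aeval x (W.ΨSq n) = psiAt (W.map (algebraMap R F)) x y n ^ 2 := by
  rw [psiAt_sq h.equation, map_ΨSq, eval_map_algebraMap]

lemma aeval_Φ (h : IsGenericPointOn W x y) (n : ℤ) : aeval x (W.Φ n) =
    x * psiAt (W.map (algebraMap R F)) x y n ^ 2 - psiAt (W.map (algebraMap R F)) x y (n + 1) *
      psiAt (W.map (algebraMap R F)) x y (n - 1) := by
  rw [sub_psiAt_succ_mul_psiAt_pred h.equation, map_Φ, eval_map_algebraMap]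

lemma aeval_preΨ (h : IsGenericPointOn W x y) (n : ℤ) :
    aeval x (W.preΨ (2 * n)) * psiAt (W.map (algebraMap R F)) x y 2 =
      psiAt (W.map (algebraMap R F)) x y (2 * n) := by
  rw [psiAt_two_mul h.equation, map_preΨ, eval_map_algebraMap]

lemma injective (h : IsGenericPointOn W x y) : Function.Injective (aeval (R := R) x) :=
  transcendental_iff_injective.mp h.transcendental

lemma mul_aeval_ΨSq [DecidableEq F] {P : (W.map (algebraMap R F)).toAffine.Point}
    (h : IsGenericPointOn W x y) (hab : MulFormula P x y n a b) :
    a * aeval x (W.ΨSq n) = aeval x (W.Φ n) := by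
  rw [h.aeval_ΨSq, h.aeval_Φ]
  linear_combination -hab.2

lemma aeval_divSym [DecidableEq F] {P : (W.map (algebraMap R F)).toAffine.Point}
    (h : IsGenericPointOn W x y) {m : ℤ} {c d : F} (hab : MulFormula P x y m a b)
    (hcd : MulFormula P x y n c d) :
    (fun i ↦ aeval x (divSym W m n i)) =
      (aeval x (W.ΨSq m) * aeval x (W.ΨSq n)) • ![a * c, a + c, 1] := by
  ext i
  fin_cases i <;> simp only [divSym, Fin.zero_eta, Fin.mk_one, Fin.reduceFinMk, Matrix.cons_val,
    map_add, map_mul, Pi.smul_apply, smul_eq_mul, ← h.mul_aeval_ΨSq hab, ← h.mul_aeval_ΨSq hcd] <;>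
    ring

variable [IsDomain R] [CharZero R]

lemma psiAt_ne_zero (h : IsGenericPointOn W x y) (hn : 0 < n) :
    psiAt (W.map (algebraMap R F)) x y n ≠ 0 := by
  rw [← pow_ne_zero_iff two_ne_zero, ← h.aeval_ΨSq, map_ne_zero_iff _ h.injective]
  exact W.ΨSq_ne_zero (Int.cast_ne_zero.mpr hn.ne')

lemma exists_hasCoords (h : IsGenericPointOn W x y) :
    ∃ P : (W.map (algebraMap R F)).toAffine.Point, HasCoords P x y := by
  refine ⟨.some x y ⟨h.equation, .inr ?_⟩, _, rfl⟩
  simpa [psiAt, ψ_two, ψ₂] using h.psiAt_ne_zero two_pos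

lemma exists_mulFormula [DecidableEq F] {P : (W.map (algebraMap R F)).toAffine.Point}
    (h : IsGenericPointOn W x y) (hP : HasCoords P x y) (hn : 0 < n) :
    ∃ a b, MulFormula P x y n a b :=
  _root_.exists_mulFormula hP (fun _ ↦ h.psiAt_ne_zero) hn

lemma psiAt_two_mul_aeval_ΨSq_sq [DecidableEq F] {P : (W.map (algebraMap R F)).toAffine.Point}
    (h : IsGenericPointOn W x y) (hP : HasCoords P x y) (hn : 0 < n)
    (hab : MulFormula P x y n a b) : psiAt (W.map (algebraMap R F)) a b 2 * aeval x (W.ΨSq n) ^ 2 =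
      aeval x (W.preΨ (2 * n)) * psiAt (W.map (algebraMap R F)) x y 2 := by
  rw [h.aeval_ΨSq, h.aeval_preΨ,
    ← hab.psiAt_two_mul_pow hP (fun _ ↦ h.psiAt_ne_zero) hn, ← pow_mul]

lemma wronskian_eq (h : IsGenericPointOn W x y) {D : Derivation R F F}
    (hD : D x = psiAt (W.map (algebraMap R F)) x y 2) (hn : 0 < n) :
    derivative (W.Φ n) * W.ΨSq n - W.Φ n * derivative (W.ΨSq n) = n * W.preΨ (2 * n) := by
  classical
  obtain ⟨P, hP⟩ := h.exists_hasCoords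
  obtain ⟨a, b, hab⟩ := h.exists_mulFormula hP hn
  have hΦ := h.mul_aeval_ΨSq hab
  have hDΦ := congrArg D hΦ
  rw [D.leibniz, hab.derivation_eq hP (fun _ ↦ h.psiAt_ne_zero) hD hn, D.map_aeval, D.map_aeval,
    hD] at hDΦ
  have hΨ := h.psiAt_two_mul_aeval_ΨSq_sq hP hn hab
  apply h.injective
  apply mul_right_cancel₀ (h.psiAt_ne_zero two_pos)
  simp only [smul_eq_mul, map_sub, map_mul, map_intCast] at hDΦ ⊢
  linear_combination (-aeval x (W.ΨSq n)) * hDΦ + n * hΨ +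
    aeval x (derivative (W.ΨSq n)) * psiAt (W.map (algebraMap R F)) x y 2 * hΦ

lemma aeval_addSubMap_divSym_self (h : IsGenericPointOn W x y) (hn : 0 < n) (i : Fin 3) :
    MvPolynomial.aeval (divSym W n n) (addSubMap W i) = divSym W (2 * n) 0 i := by
  classical
  obtain ⟨P, hP⟩ := h.exists_hasCoords
  obtain ⟨a, b, hab⟩ := h.exists_mulFormula hP hn
  obtain ⟨c, d, hcd⟩ := h.exists_mulFormula hP (n := 2 * n) (by omega)
  have hψb := hab.psiAt_two_ne_zero hP (fun _ ↦ h.psiAt_ne_zero) hn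
  have hψ := hab.psiAt_two_mul_pow hP (fun _ ↦ h.psiAt_ne_zero) hn
  have hdouble : HasCoords (2 • n • P) c d := by
    rw [← natCast_zsmul, smul_smul]
    exact hcd.1
  have hscale : (aeval x (W.ΨSq n) * aeval x (W.ΨSq n) * psiAt (W.map (algebraMap R F)) a b 2) ^ 2 =
      aeval x (W.ΨSq (2 * n)) := by
    rw [h.aeval_ΨSq, h.aeval_ΨSq, ← hψ]
    ring
  apply h.injective
  rw [aeval_aeval_addSubMap, h.aeval_divSym hab hab, hab.1.eval_addSubMap_self hψb hdouble, hscale,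
    divSym_zero_right]
  fin_cases i
  · simpa [mul_comm c] using h.mul_aeval_ΨSq hcd
  all_goals simp

lemma aeval_addSubMap_divSym_succ (h : IsGenericPointOn W x y) (hn : 0 < n) (i : Fin 3) :
    MvPolynomial.aeval (divSym W (n + 1) n) (addSubMap W i) = divSym W (2 * n + 1) 1 i := by
  classical
  obtain ⟨P, hP⟩ := h.exists_hasCoords
  obtain ⟨a, b, hab⟩ := h.exists_mulFormula hP hn
  obtain ⟨a', b', hab'⟩ := h.exists_mulFormula hP (n := n + 1) (by omega)
  obtain ⟨c, d, hcd⟩ := h.exists_mulFormula hP (n := 2 * n + 1) (by omega)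
  have hψ := psiAt_two_mul_add_one hab hab'
  have hne : a' ≠ a := by
    rintro rfl
    exact h.psiAt_ne_zero (n := 2 * n + 1) (by omega) (by rw [hψ, sub_self, mul_zero])
  have hadd : HasCoords ((n + 1) • P + n • P) c d := by
    rw [← add_smul, show n + 1 + n = 2 * n + 1 by ring]
    exact hcd.1
  have hsub : HasCoords ((n + 1) • P - n • P) x y := by
    rwa [add_one_zsmul, add_sub_cancel_left]
  have hscale : (aeval x (W.ΨSq (n + 1)) * aeval x (W.ΨSq n) * (a' - a)) ^ 2 =
      aeval x (W.ΨSq (2 * n + 1)) * aeval x (W.ΨSq 1) := by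
    rw [W.ΨSq_one, map_one, h.aeval_ΨSq, h.aeval_ΨSq, h.aeval_ΨSq, hψ]
    ring
  apply h.injective
  rw [aeval_aeval_addSubMap, h.aeval_divSym hab' hab, hab'.1.eval_addSubMap hab.1 hne hadd hsub,
    hscale, ← h.aeval_divSym hcd (mulFormula_one hP)]

end IsGenericPointOn

end GenericPoint

section Universal

/-- The universal Weierstrass curve over `A`, whose five coefficients are indeterminates. -/
noncomputable def universalCurve (A : Type*) [CommRing A] :
    WeierstrassCurve (MvPolynomial (Fin 5) A) :=
  ⟨.X 0, .X 1, .X 2, .X 3, .X 4⟩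

variable {A R : Type*} [CommRing A] [CommRing R]

lemma exists_map_universalCurve (A : Type*) [CommRing A] [Algebra A R] (W : WeierstrassCurve R) :
    ∃ f : MvPolynomial (Fin 5) A →+* R, (universalCurve A).map f = W :=
  ⟨(MvPolynomial.aeval ![W.a₁, W.a₂, W.a₃, W.a₄, W.a₆]).toRingHom, by
    ext <;> simp [universalCurve]⟩

lemma map_divSym {S : Type*} [CommRing S] (W : WeierstrassCurve R) (f : R →+* S) (m n : ℤ)
    (i : Fin 3) : divSym (W.map f) m n i = (divSym W m n i).map f := by
  fin_cases i <;> simp [divSym]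

lemma Δ_universalCurve_ne_zero (k : Type*) [Field k] : (universalCurve k).Δ ≠ 0 := by
  classical
  obtain ⟨f, hf⟩ := exists_map_universalCurve k (ofJ (0 : k))
  intro h
  apply (ofJ (0 : k)).isUnit_Δ.ne_zero
  rw [← hf, map_Δ, h, map_zero]

variable {n : ℤ}

theorem wronskian_Φ_ΨSq (W : WeierstrassCurve R) (hn : 0 < n) :
    derivative (W.Φ n) * W.ΨSq n - W.Φ n * derivative (W.ΨSq n) = n * W.preΨ (2 * n) := by
  obtain ⟨f, rfl⟩ := exists_map_universalCurve ℤ W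
  obtain ⟨F, _, _, x, y, D, h, hD⟩ := exists_isGenericPointOn (universalCurve ℤ)
  have key := congrArg (map f) (h.wronskian_eq hD hn)
  simpa only [map_Φ, map_ΨSq, map_preΨ, derivative_map, Polynomial.map_sub, Polynomial.map_mul,
    Polynomial.map_intCast] using key

lemma map_aeval_addSubMap_divSym (W : WeierstrassCurve R) {S : Type*} [CommRing S] (f : R →+* S)
    (m n : ℤ) (i : Fin 3) :
    MvPolynomial.aeval (divSym (W.map f) m n) (addSubMap (W.map f) i) =
      (MvPolynomial.aeval (divSym W m n) (addSubMap W i)).map f := by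
  rw [funext (map_divSym W f m n)]
  exact (map_aeval_addSubMap W (g := mapRingHom f) (by ext; simp) _ i).symm

theorem aeval_addSubMap_divSym_self (W : WeierstrassCurve R) (hn : 0 < n) (i : Fin 3) :
    MvPolynomial.aeval (divSym W n n) (addSubMap W i) = divSym W (2 * n) 0 i := by
  obtain ⟨f, rfl⟩ := exists_map_universalCurve ℤ W
  obtain ⟨F, _, _, x, y, D, h, -⟩ := exists_isGenericPointOn (universalCurve ℤ)
  rw [map_aeval_addSubMap_divSym, h.aeval_addSubMap_divSym_self hn, map_divSym]

theorem aeval_addSubMap_divSym_succ (W : WeierstrassCurve R) (hn : 0 < n) (i : Fin 3) :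
    MvPolynomial.aeval (divSym W (n + 1) n) (addSubMap W i) = divSym W (2 * n + 1) 1 i := by
  obtain ⟨f, rfl⟩ := exists_map_universalCurve ℤ W
  obtain ⟨F, _, _, x, y, D, h, -⟩ := exists_isGenericPointOn (universalCurve ℤ)
  rw [map_aeval_addSubMap_divSym, h.aeval_addSubMap_divSym_succ hn, map_divSym]

end Universal

section Coprime

variable {R K : Type*} [CommRing R] [Field K] [Algebra R K] {W : WeierstrassCurve R} {α : K}
  {m n : ℤ}

/-- `α` is a common root of the numerator `Φₙ` and the denominator `ΨSqₙ` of `x([n]P)`. -/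
def IsCommonRoot (W : WeierstrassCurve R) (α : K) (n : ℤ) : Prop :=
  aeval α (W.Φ n) = 0 ∧ aeval α (W.ΨSq n) = 0

lemma IsCommonRoot.aeval_divSym_eq_zero (h : IsCommonRoot W α m) (n : ℤ) (i : Fin 3) :
    aeval α (divSym W m n i) = 0 := by
  fin_cases i <;> simp [divSym, h.1, h.2]

lemma isCommonRoot_or_of_aeval_divSym_eq_zero (h : ∀ i, aeval α (divSym W m n i) = 0) :
    IsCommonRoot W α m ∨ IsCommonRoot W α n := by
  have h₀ := h 0
  have h₁ := h 1
  have h₂ := h 2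
  simp only [divSym, Matrix.cons_val, map_add, map_mul, mul_eq_zero] at h₀ h₁ h₂
  rcases h₀ with h₀ | h₀ <;> rcases h₂ with h₂ | h₂ <;>
    simp_all only [IsCommonRoot, zero_mul, mul_zero, zero_add, add_zero, mul_eq_zero] <;> tauto

lemma isCommonRoot_or_of_aeval_addSubMap_eq_zero [W.IsElliptic]
    (h : ∀ i, aeval α (MvPolynomial.aeval (divSym W m n) (addSubMap W i)) = 0) :
    IsCommonRoot W α m ∨ IsCommonRoot W α n := by
  simp only [aeval_aeval_addSubMap] at h
  by_contra hmn
  refine addSubMap_ne_zero (W.map (algebraMap R K)) (fun h₀ ↦ hmn ?_) (funext h)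
  exact isCommonRoot_or_of_aeval_divSym_eq_zero (congrFun h₀)

lemma IsCommonRoot.of_two_mul [W.IsElliptic] (hn : 0 < n) (h : IsCommonRoot W α (2 * n)) :
    IsCommonRoot W α n := by
  rw [← or_self (IsCommonRoot W α n)]
  apply isCommonRoot_or_of_aeval_addSubMap_eq_zero fun i ↦ ?_
  rw [aeval_addSubMap_divSym_self W hn, h.aeval_divSym_eq_zero]

lemma IsCommonRoot.of_two_mul_add_one [W.IsElliptic] (hn : 0 < n)
    (h : IsCommonRoot W α (2 * n + 1)) : IsCommonRoot W α (n + 1) ∨ IsCommonRoot W α n := by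
  apply isCommonRoot_or_of_aeval_addSubMap_eq_zero fun i ↦ ?_
  rw [aeval_addSubMap_divSym_succ W hn, h.aeval_divSym_eq_zero]

lemma not_isCommonRoot [W.IsElliptic] (hn : 0 < n) : ¬ IsCommonRoot W α n := by
  induction n using Int.strongRec (m := 1) with
  | lt n hn' => omega
  | ge n _ ih =>
    intro h
    rcases Int.even_or_odd' n with ⟨k, rfl | rfl⟩
    · exact ih k (by omega) (by omega) (h.of_two_mul (by omega))
    obtain rfl | hk : k = 0 ∨ 0 < k := by omega
    · simpa using h.2
    rcases h.of_two_mul_add_one hk with h | h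
    · exact ih (k + 1) (by omega) (by omega) h
    · exact ih k (by omega) hk h

theorem isCoprime_Φ_ΨSq (W : WeierstrassCurve R) [W.IsElliptic] (hn : 0 < n) :
    IsCoprime (W.Φ n) (W.ΨSq n) := by
  by_contra h
  rw [← Ideal.isCoprime_span_singleton_iff, Ideal.isCoprime_iff_sup_eq] at h
  obtain ⟨M, hM, hle⟩ := Ideal.exists_le_maximal _ h
  let _ : Field (R[X] ⧸ M) := Ideal.Quotient.field M
  have hroot {f : R[X]} (hf : f ∈ M) : aeval (Ideal.Quotient.mk M X) f = 0 := by
    rw [← Ideal.Quotient.mkₐ_eq_mk R, aeval_algHom_apply, aeval_X_left_apply]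
    exact Ideal.Quotient.eq_zero_iff_mem.mpr hf
  refine not_isCommonRoot (W := W) hn ⟨hroot (hle ?_), hroot (hle ?_)⟩
  · exact Ideal.mem_sup_left (Ideal.mem_span_singleton_self _)
  · exact Ideal.mem_sup_right (Ideal.mem_span_singleton_self _)

end Coprime

section Derivative

variable {R : Type*} [CommRing R] {W : WeierstrassCurve R} {n : ℤ}

lemma derivative_Φ_ΨSq_eq_zero_of_isElliptic [IsDomain R] [W.IsElliptic] (hn : 0 < n)
    (h : (n : R) = 0) : derivative (W.Φ n) = 0 ∧ derivative (W.ΨSq n) = 0 := by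
  have hwronskian := wronskian_Φ_ΨSq W hn
  have hcoprime := isCoprime_Φ_ΨSq W hn
  rw [← C_eq_intCast, h, C_0, zero_mul, sub_eq_zero] at hwronskian
  constructor
  · rw [← dvd_derivative_iff]
    exact hcoprime.dvd_of_dvd_mul_right (hwronskian ▸ dvd_mul_right _ _)
  · rw [← dvd_derivative_iff]
    exact hcoprime.symm.dvd_of_dvd_mul_left (hwronskian ▸ dvd_mul_left _ _)

lemma derivative_universalCurve_Φ_ΨSq_eq_zero (k : Type*) [Field k] (hn : 0 < n) (h : (n : k) = 0) :
    derivative ((universalCurve k).Φ n) = 0 ∧ derivative ((universalCurve k).ΨSq n) = 0 := by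
  let K := FractionRing (MvPolynomial (Fin 5) k)
  let f := algebraMap (MvPolynomial (Fin 5) k) K
  have hf : Function.Injective f := IsFractionRing.injective _ _
  have : ((universalCurve k).map f).IsElliptic := by
    rw [isElliptic_iff, map_Δ, isUnit_iff_ne_zero, map_ne_zero_iff f hf]
    exact Δ_universalCurve_ne_zero k
  have hnK : (n : K) = 0 := by
    rw [← map_intCast (algebraMap k K), h, map_zero]
  have hder := derivative_Φ_ΨSq_eq_zero_of_isElliptic (W := (universalCurve k).map f) hn hnK
  simpa only [map_Φ, map_ΨSq, derivative_map, Polynomial.map_eq_zero_iff hf] using hder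

theorem derivative_Φ_ΨSq_eq_zero {k : Type*} [Field k] [Algebra k R] (W : WeierstrassCurve R)
    (hn : 0 < n) (h : (n : k) = 0) : derivative (W.Φ n) = 0 ∧ derivative (W.ΨSq n) = 0 := by
  obtain ⟨f, rfl⟩ := exists_map_universalCurve k W
  obtain ⟨hΦ, hΨ⟩ := derivative_universalCurve_Φ_ΨSq_eq_zero k hn h
  simp only [map_Φ, map_ΨSq, derivative_map, hΦ, hΨ, Polynomial.map_zero, and_self]

end Derivative

section Grading

variable {A σ : Type*} [SetLike σ A] {𝒜 : ℤ → σ} {d i j : ℤ} {a b : A}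

lemma mul_mem_graded_of_add_eq [Monoid A] [SetLike.GradedMonoid 𝒜] (ha : a ∈ 𝒜 i) (hb : b ∈ 𝒜 j)
    (h : i + j = d) : a * b ∈ 𝒜 d :=
  h ▸ SetLike.mul_mem_graded ha hb

lemma ite_mem_graded (P : Prop) [Decidable P] (ha : a ∈ 𝒜 i) (hb : b ∈ 𝒜 j) :
    (if P then a else b) ∈ 𝒜 (if P then i else j) := by
  split_ifs
  exacts [ha, hb]

variable [CommRing A] [AddSubgroupClass σ A]

lemma ofNat_mul_mem_graded (n : ℕ) [n.AtLeastTwo] (ha : a ∈ 𝒜 i) : OfNat.ofNat n * a ∈ 𝒜 i := by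
  rw [← Nat.cast_ofNat, ← nsmul_eq_mul]
  exact nsmul_mem ha _

/-- The grading of `A[X]` induced by a grading of `A` when the indeterminate has degree `2`. The
degrees are integers, so that `d - 2 * k` is not truncated. -/
def polynomialGrading (𝒜 : ℤ → σ) (d : ℤ) : AddSubgroup A[X] where
  carrier := {f | ∀ k : ℕ, f.coeff k ∈ 𝒜 (d - 2 * k)}
  zero_mem' _ := zero_mem _
  add_mem' hf hg k := by simpa using add_mem (hf k) (hg k)
  neg_mem' hf k := by simpa using neg_mem (hf k)

lemma C_mul_X_pow_mem_polynomialGrading (k : ℕ) (ha : a ∈ 𝒜 i) (h : i + 2 * k = d) :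
    C a * X ^ k ∈ polynomialGrading 𝒜 d := by
  intro l
  rw [coeff_C_mul_X_pow]
  split_ifs with hl
  · rwa [hl, ← h, add_sub_cancel_right]
  · exact zero_mem _

variable [SetLike.GradedMonoid 𝒜]

instance : SetLike.GradedMonoid (polynomialGrading 𝒜) where
  one_mem := by
    simpa using C_mul_X_pow_mem_polynomialGrading 0 (SetLike.one_mem_graded 𝒜) (add_zero 0)
  mul_mem i j f g hf hg k := by
    rw [coeff_mul]
    refine sum_mem fun ⟨l, m⟩ hlm ↦ mul_mem_graded_of_add_eq (hf l) (hg m) ?_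
    rw [← Finset.HasAntidiagonal.mem_antidiagonal.mp hlm]
    push_cast
    ring

lemma X_mem_polynomialGrading : X ∈ polynomialGrading 𝒜 2 := by
  simpa using C_mul_X_pow_mem_polynomialGrading 1 (SetLike.one_mem_graded 𝒜) (zero_add (2 * 1))

/-- The degree of `preΨ' n` when `x` has degree `2` and each `aᵢ` has degree `i`. -/
def preΨDegree (n : ℕ) : ℤ :=
  n ^ 2 - if Even n then 4 else 1

lemma preNormEDS'_mem_graded {b c d : A} (hb : b ∈ 𝒜 12) (hc : c ∈ 𝒜 8) (hd : d ∈ 𝒜 12) (n : ℕ) :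
    preNormEDS' b c d n ∈ 𝒜 (preΨDegree n) := by
  have h1 := SetLike.one_mem_graded 𝒜
  induction n using normEDSRec with
  | zero => simpa only [preNormEDS'_zero] using zero_mem _
  | one => simpa [preΨDegree] using h1
  | two => simpa [preΨDegree] using h1
  | three => simpa [preΨDegree, show ¬ Even 3 by decide] using hc
  | four => simpa [preΨDegree, show Even 4 by decide] using hd
  | even m h₁ h₂ h₃ h₄ h₅ =>
    rw [preNormEDS'_even]
    refine sub_mem
      (mul_mem_graded_of_add_eq (SetLike.mul_mem_graded (SetLike.pow_mem_graded 2 h₂) h₃) h₅ ?_)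
      (mul_mem_graded_of_add_eq (SetLike.mul_mem_graded h₁ h₃) (SetLike.pow_mem_graded 2 h₄) ?_)
    all_goals grind [preΨDegree]
  | odd m h₁ h₂ h₃ h₄ =>
    rw [preNormEDS'_odd]
    refine sub_mem
      (mul_mem_graded_of_add_eq (SetLike.mul_mem_graded h₄ (SetLike.pow_mem_graded 3 h₂))
        (ite_mem_graded _ hb h1) ?_)
      (mul_mem_graded_of_add_eq (SetLike.mul_mem_graded h₁ (SetLike.pow_mem_graded 3 h₃))
        (ite_mem_graded _ h1 hb) ?_)
    all_goals grind [preΨDegree]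

end Grading

section Homogeneous

variable {A σ : Type*} [CommRing A] [SetLike σ A] [AddSubgroupClass σ A] {𝒜 : ℤ → σ}
  [SetLike.GradedMonoid 𝒜] {W : WeierstrassCurve A}

/-- `W` is homogeneous for the grading `𝒜` if each coefficient `aᵢ` has degree `i`. -/
structure IsHomogeneousCurve (𝒜 : ℤ → σ) (W : WeierstrassCurve A) : Prop where
  a₁ : W.a₁ ∈ 𝒜 1
  a₂ : W.a₂ ∈ 𝒜 2
  a₃ : W.a₃ ∈ 𝒜 3
  a₄ : W.a₄ ∈ 𝒜 4
  a₆ : W.a₆ ∈ 𝒜 6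

namespace IsHomogeneousCurve

lemma b₂_mem (h : IsHomogeneousCurve 𝒜 W) : W.b₂ ∈ 𝒜 2 :=
  add_mem (SetLike.pow_mem_graded 2 h.a₁) (ofNat_mul_mem_graded 4 h.a₂)

lemma b₄_mem (h : IsHomogeneousCurve 𝒜 W) : W.b₄ ∈ 𝒜 4 :=
  add_mem (ofNat_mul_mem_graded 2 h.a₄) (SetLike.mul_mem_graded h.a₁ h.a₃)

lemma b₆_mem (h : IsHomogeneousCurve 𝒜 W) : W.b₆ ∈ 𝒜 6 :=
  add_mem (SetLike.pow_mem_graded 2 h.a₃) (ofNat_mul_mem_graded 4 h.a₆)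

lemma b₈_mem (h : IsHomogeneousCurve 𝒜 W) : W.b₈ ∈ 𝒜 8 := by
  have h₁ := SetLike.mul_mem_graded (SetLike.pow_mem_graded 2 h.a₁) h.a₆
  have h₂ := SetLike.mul_mem_graded h.a₂ h.a₆
  have h₃ := SetLike.mul_mem_graded (SetLike.mul_mem_graded h.a₁ h.a₃) h.a₄
  have h₄ := SetLike.mul_mem_graded h.a₂ (SetLike.pow_mem_graded 2 h.a₃)
  have h₅ := SetLike.pow_mem_graded 2 h.a₄
  rw [b₈, mul_assoc 4]
  exact sub_mem (add_mem (sub_mem (add_mem h₁ (ofNat_mul_mem_graded 4 h₂)) h₃) h₄) h₅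

lemma Ψ₂Sq_mem (h : IsHomogeneousCurve 𝒜 W) : W.Ψ₂Sq ∈ polynomialGrading 𝒜 6 := by
  have h₄ : (4 : A) ∈ 𝒜 0 := SetLike.natCast_mem_graded 𝒜 4
  have hsum : W.Ψ₂Sq =
      C 4 * X ^ 3 + C W.b₂ * X ^ 2 + C (2 * W.b₄) * X ^ 1 + C W.b₆ * X ^ 0 := by
    simp [Ψ₂Sq]
  rw [hsum]
  refine add_mem (add_mem (add_mem ?_ ?_) ?_) ?_
  · exact C_mul_X_pow_mem_polynomialGrading 3 h₄ rfl
  · exact C_mul_X_pow_mem_polynomialGrading 2 h.b₂_mem rfl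
  · exact C_mul_X_pow_mem_polynomialGrading 1 (ofNat_mul_mem_graded 2 h.b₄_mem) rfl
  · exact C_mul_X_pow_mem_polynomialGrading 0 h.b₆_mem rfl

lemma Ψ₃_mem (h : IsHomogeneousCurve 𝒜 W) : W.Ψ₃ ∈ polynomialGrading 𝒜 8 := by
  have h₃ : (3 : A) ∈ 𝒜 0 := SetLike.natCast_mem_graded 𝒜 3
  have hsum : W.Ψ₃ = C 3 * X ^ 4 + C W.b₂ * X ^ 3 + C (3 * W.b₄) * X ^ 2 +
      C (3 * W.b₆) * X ^ 1 + C W.b₈ * X ^ 0 := by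
    simp [Ψ₃, map_ofNat C]
  rw [hsum]
  refine add_mem (add_mem (add_mem (add_mem ?_ ?_) ?_) ?_) ?_
  · exact C_mul_X_pow_mem_polynomialGrading 4 h₃ rfl
  · exact C_mul_X_pow_mem_polynomialGrading 3 h.b₂_mem rfl
  · exact C_mul_X_pow_mem_polynomialGrading 2 (ofNat_mul_mem_graded 3 h.b₄_mem) rfl
  · exact C_mul_X_pow_mem_polynomialGrading 1 (ofNat_mul_mem_graded 3 h.b₆_mem) rfl
  · exact C_mul_X_pow_mem_polynomialGrading 0 h.b₈_mem rfl

lemma preΨ₄_mem (h : IsHomogeneousCurve 𝒜 W) : W.preΨ₄ ∈ polynomialGrading 𝒜 12 := by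
  have h₂ : (2 : A) ∈ 𝒜 0 := SetLike.natCast_mem_graded 𝒜 2
  have h₁₀ : W.b₂ * W.b₈ - W.b₄ * W.b₆ ∈ 𝒜 10 :=
    sub_mem (SetLike.mul_mem_graded h.b₂_mem h.b₈_mem) (SetLike.mul_mem_graded h.b₄_mem h.b₆_mem)
  have h₁₂ : W.b₄ * W.b₈ - W.b₆ ^ 2 ∈ 𝒜 12 :=
    sub_mem (SetLike.mul_mem_graded h.b₄_mem h.b₈_mem) (SetLike.pow_mem_graded 2 h.b₆_mem)
  have hsum : W.preΨ₄ = C 2 * X ^ 6 + C W.b₂ * X ^ 5 + C (5 * W.b₄) * X ^ 4 +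
      C (10 * W.b₆) * X ^ 3 + C (10 * W.b₈) * X ^ 2 + C (W.b₂ * W.b₈ - W.b₄ * W.b₆) * X ^ 1 +
      C (W.b₄ * W.b₈ - W.b₆ ^ 2) * X ^ 0 := by
    simp [preΨ₄, map_ofNat C]
  rw [hsum]
  refine add_mem (add_mem (add_mem (add_mem (add_mem (add_mem ?_ ?_) ?_) ?_) ?_) ?_) ?_
  · exact C_mul_X_pow_mem_polynomialGrading 6 h₂ rfl
  · exact C_mul_X_pow_mem_polynomialGrading 5 h.b₂_mem rfl
  · exact C_mul_X_pow_mem_polynomialGrading 4 (ofNat_mul_mem_graded 5 h.b₄_mem) rfl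
  · exact C_mul_X_pow_mem_polynomialGrading 3 (ofNat_mul_mem_graded 10 h.b₆_mem) rfl
  · exact C_mul_X_pow_mem_polynomialGrading 2 (ofNat_mul_mem_graded 10 h.b₈_mem) rfl
  · exact C_mul_X_pow_mem_polynomialGrading 1 h₁₀ rfl
  · exact C_mul_X_pow_mem_polynomialGrading 0 h₁₂ rfl

lemma preΨ'_mem (h : IsHomogeneousCurve 𝒜 W) (n : ℕ) :
    W.preΨ' n ∈ polynomialGrading 𝒜 (preΨDegree n) :=
  preNormEDS'_mem_graded (SetLike.pow_mem_graded 2 h.Ψ₂Sq_mem) h.Ψ₃_mem h.preΨ₄_mem n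

theorem ΨSq_mem (h : IsHomogeneousCurve 𝒜 W) (n : ℕ) :
    W.ΨSq n ∈ polynomialGrading 𝒜 (2 * (n ^ 2 - 1)) := by
  rw [ΨSq_ofNat]
  refine mul_mem_graded_of_add_eq (SetLike.pow_mem_graded 2 (h.preΨ'_mem n))
    (ite_mem_graded _ h.Ψ₂Sq_mem (SetLike.one_mem_graded _)) ?_
  grind [preΨDegree]

theorem Φ_mem (h : IsHomogeneousCurve 𝒜 W) (n : ℕ) :
    W.Φ n ∈ polynomialGrading 𝒜 (2 * n ^ 2) := by
  have h1 := SetLike.one_mem_graded (polynomialGrading 𝒜)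
  have hX := X_mem_polynomialGrading (𝒜 := 𝒜)
  rcases n with - | n
  · simpa using h1
  rw [Nat.cast_add_one, Φ_ofNat]
  refine sub_mem
    (mul_mem_graded_of_add_eq (SetLike.mul_mem_graded hX (SetLike.pow_mem_graded 2 (h.preΨ'_mem _)))
      (ite_mem_graded _ h1 h.Ψ₂Sq_mem) ?_)
    (mul_mem_graded_of_add_eq (SetLike.mul_mem_graded (h.preΨ'_mem _) (h.preΨ'_mem _))
      (ite_mem_graded _ h.Ψ₂Sq_mem h1) ?_)
  all_goals grind [preΨDegree]

end IsHomogeneousCurve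

end Homogeneous

section WeightedHomogeneous

attribute [local instance] MvPolynomial.WeightedHomogeneousSubmodule.gradedMonoid

variable {R : Type*} [CommRing R]

lemma isHomogeneousCurve_Wst (R : Type*) [CommRing R] :
    IsHomogeneousCurve (MvPolynomial.weightedHomogeneousSubmodule R (![4, 6] : Fin 2 → ℤ))
      (Wst R) where
  a₁ := zero_mem _
  a₂ := zero_mem _
  a₃ := zero_mem _
  a₄ := MvPolynomial.isWeightedHomogeneous_X R _ 0
  a₆ := MvPolynomial.isWeightedHomogeneous_X R _ 1

lemma isWeightedHomogeneous_of_eq_two_mul {σ : Type*} {w : σ → ℕ} {w' : σ → ℤ}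
    (hw : ∀ i, w' i = 2 * w i) {f : MvPolynomial σ R} {k : ℕ}
    (hf : f.IsWeightedHomogeneous w' (2 * k)) : f.IsWeightedHomogeneous w k := by
  intro e he
  have hweight : Finsupp.weight w' e = 2 * (Finsupp.weight w e : ℕ) := by
    simp only [Finsupp.weight_apply, Finsupp.sum, hw, Nat.cast_sum, Finset.mul_sum, nsmul_eq_mul,
      smul_eq_mul, Nat.cast_mul, mul_left_comm]
  have := hf he
  omega

lemma isWeightedHomogeneous_coeff_of_mem_polynomialGrading {f : (MvPolynomial (Fin 2) R)[X]}
    {m k : ℕ} {d : ℤ} (hf : f ∈ polynomialGrading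
      (MvPolynomial.weightedHomogeneousSubmodule R (![4, 6] : Fin 2 → ℤ)) d)
    (h : 2 * (m + k) = d) : (f.coeff k).IsWeightedHomogeneous (![2, 3] : Fin 2 → ℕ) m := by
  apply isWeightedHomogeneous_of_eq_two_mul (w' := ![4, 6]) (by simp [Fin.forall_fin_two])
  rw [← MvPolynomial.mem_weightedHomogeneousSubmodule, ← add_sub_cancel_right (2 * (m : ℤ)) (2 * k),
    ← mul_add, h]
  exact hf k

variable (R) {m n k : ℕ}

theorem isWeightedHomogeneous_coeff_Φ (h : m + k = n ^ 2) :
    (((Wst R).Φ n).coeff k).IsWeightedHomogeneous (![2, 3] : Fin 2 → ℕ) m :=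
  isWeightedHomogeneous_coeff_of_mem_polynomialGrading ((isHomogeneousCurve_Wst R).Φ_mem n)
    (mod_cast congrArg (2 * ·) h)

theorem isWeightedHomogeneous_coeff_ΨSq (h : m + k + 1 = n ^ 2) :
    (((Wst R).ΨSq n).coeff k).IsWeightedHomogeneous (![2, 3] : Fin 2 → ℕ) m :=
  isWeightedHomogeneous_coeff_of_mem_polynomialGrading ((isHomogeneousCurve_Wst R).ΨSq_mem n)
    (by rw [← Nat.cast_pow, ← h]; push_cast; ring)

end WeightedHomogeneous

section Sigma

variable {R : Type*} [CommRing R] (W : WeierstrassCurve R) (a : R) {n : ℤ}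

lemma degree_C_mul_ΨSq_lt_degree_Φ [Nontrivial R] (hn : n ≠ 0) :
    (C a * W.ΨSq n).degree < (W.Φ n).degree := by
  have hΨ := (natDegree_C_mul_le a (W.ΨSq n)).trans (W.natDegree_ΨSq_le n)
  have hn' : 0 < n.natAbs ^ 2 := by positivity
  exact degree_lt_degree (by rw [natDegree_Φ]; omega)

lemma monic_Φ_sub_C_mul_ΨSq [Nontrivial R] (hn : n ≠ 0) : (W.Φ n - C a * W.ΨSq n).Monic :=
  Monic.sub_of_left (W.leadingCoeff_Φ n) (degree_C_mul_ΨSq_lt_degree_Φ W a hn)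

lemma natDegree_Φ_sub_C_mul_ΨSq [Nontrivial R] (hn : n ≠ 0) :
    (W.Φ n - C a * W.ΨSq n).natDegree = n.natAbs ^ 2 := by
  rw [natDegree_eq_of_degree_eq (degree_sub_eq_left_of_degree_lt
    (degree_C_mul_ΨSq_lt_degree_Φ W a hn)), natDegree_Φ]

theorem expand_contract_Φ_sub_C_mul_ΨSq [IsDomain R] (p : ℕ) [Fact p.Prime] [CharP R p] :
    expand R p (contract p (W.Φ p - C a * W.ΨSq p)) = W.Φ p - C a * W.ΨSq p := by
  let _ := ZMod.algebra R p
  have hp := (Fact.out : p.Prime)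
  obtain ⟨hΦ, hΨ⟩ := derivative_Φ_ΨSq_eq_zero (k := ZMod p) (n := p) W (mod_cast hp.pos) (by simp)
  apply expand_contract p _ hp.ne_zero
  rw [derivative_sub, derivative_C_mul, hΦ, hΨ, mul_zero, sub_zero]

lemma sigmaP_eq (p : ℕ) [Fact p.Prime] :
    sigmaP p = ((Wst (ZMod p)).map C).Φ p - C X * ((Wst (ZMod p)).map C).ΨSq p := by
  rw [sigmaP, map_Φ, map_ΨSq]

lemma coeff_sigmaP (p k : ℕ) [Fact p.Prime] : (sigmaP p).coeff k =
    C (((Wst (ZMod p)).Φ p).coeff k) + X * C (-((Wst (ZMod p)).ΨSq p).coeff k) := by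
  rw [sigmaP, coeff_sub, coeff_C_mul, coeff_map, coeff_map, C_neg]
  ring

end Sigma

theorem exists_eta_general (p : ℕ) [Fact p.Prime] :
    ∃ η : Polynomial (Polynomial (MvPolynomial (Fin 2) (ZMod p))),
      η.Monic ∧ η.natDegree = p ∧ η.comp (Polynomial.X ^ p) = sigmaP p ∧
      ∀ i, 1 ≤ i → i ≤ p →
        ∃ b c : MvPolynomial (Fin 2) (ZMod p),
          b.IsWeightedHomogeneous (![2, 3] : Fin 2 → ℕ) (p * i) ∧
          c.IsWeightedHomogeneous (![2, 3] : Fin 2 → ℕ) (p * i - 1) ∧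
          η.coeff (p - i) = Polynomial.C b + Polynomial.X * Polynomial.C c := by
  have hp := (Fact.out : p.Prime)
  have hp₀ : (p : ℤ) ≠ 0 := mod_cast hp.ne_zero
  let W := (Wst (ZMod p)).map C
  have hexp : expand _ p (contract p (sigmaP p)) = sigmaP p := by
    rw [sigmaP_eq, expand_contract_Φ_sub_C_mul_ΨSq]
  refine ⟨contract p (sigmaP p), ?monic, ?natDegree, ?comp, fun i hi hip ↦ ?coeff⟩
  case monic =>
    rw [← monic_expand_iff hp.pos, hexp, sigmaP_eq]
    exact monic_Φ_sub_C_mul_ΨSq W X hp₀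
  case natDegree =>
    apply Nat.eq_of_mul_eq_mul_right hp.pos
    rw [← natDegree_expand, hexp, sigmaP_eq, natDegree_Φ_sub_C_mul_ΨSq _ _ hp₀, Int.natAbs_natCast,
      sq]
  case comp => rw [← expand_eq_comp_X_pow, hexp]
  case coeff =>
    have hdeg : p * i + (p - i) * p = p ^ 2 := by
      rw [mul_comm p i, ← add_mul, Nat.add_sub_cancel' hip, sq]
    have hdeg' : p * i - 1 + (p - i) * p + 1 = p ^ 2 := by
      have hpos : 0 < p * i := Nat.mul_pos hp.pos hi
      omega
    exact ⟨_, _, isWeightedHomogeneous_coeff_Φ _ hdeg,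
      (isWeightedHomogeneous_coeff_ΨSq _ hdeg').neg,
      by rw [coeff_contract hp.ne_zero, coeff_sigmaP]⟩

/-- The mod-`p` reduction of `σ_{s,t,x̃}(x)` is a monic polynomial of degree `p²` in `x` which
is a polynomial in `x^p`: there is a monic `η_{s,t,x̃}(X)` of degree `p` with
`η_{s,t,x̃}(x^p) = σ_{s,t,x̃}(x) mod p`, whose coefficient of `X^(p-i)` has the form
`b_{pi} + x̃·c_{pi-1}` with `b_k, c_k ∈ F_p[s,t]` weight-homogeneous of weight `k`
(for `wt s = 2`, `wt t = 3`). -/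
theorem exists_eta (p : ℕ) [Fact p.Prime] (hodd : Odd p) (hp3 : 3 ≤ p)
    (K : Type*) [Field K] [CharP K p] :
    ∃ η : Polynomial (Polynomial (MvPolynomial (Fin 2) (ZMod p))),
      η.Monic ∧ η.natDegree = p ∧ η.comp (Polynomial.X ^ p) = sigmaP p ∧
      ∀ i, 1 ≤ i → i ≤ p →
        ∃ b c : MvPolynomial (Fin 2) (ZMod p),
          b.IsWeightedHomogeneous (![2, 3] : Fin 2 → ℕ) (p * i) ∧
          c.IsWeightedHomogeneous (![2, 3] : Fin 2 → ℕ) (p * i - 1) ∧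
          η.coeff (p - i) = Polynomial.C b + Polynomial.X * Polynomial.C c :=
  exists_eta_general p
end
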